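/- arXiv:2310.05328 — 4 statements merged into one kernel-verified Lean document; each statement's English description precedes it below -/
import Mathlib

section
/- For every n ≥ 4, all real numbers y_1, …, y_n, and every integer 1 ≤ k ≤ n−3, one has |s_n(y)|^(1/n) ≤ max_{k' ∈ {k, k+1}} (2n)^((1/2)·log((n−1)/(n−k'−1))) · |s_{n−k'}(y)|^(1/(n−k')), where log denotes the natural logarithm. -/
open Finset Real

/-- The non-normalized elementary symmetric function `S_m(y)`. -/
noncomputable def esymmS (n m : ℕ) (y : Fin n → ℝ) : ℝ :=
  ∑ A ∈ powersetCard m (univ : Finset (Fin n)), ∏ i ∈ A, y i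

/-- The elementary symmetric mean `s_m(y) = S_m(y) / binom(n,m)`. -/
noncomputable def smean (n m : ℕ) (y : Fin n → ℝ) : ℝ :=
  esymmS n m y / (n.choose m)

theorem aux_root_bound {g M m c E s : ℝ} (hg : 0 ≤ g) (hM : 1 ≤ M) (hm : 0 < m) (hs : 0 ≤ s)
    (h : g ^ m ≤ M ^ c * s) (hE : c / m ≤ E) : g ≤ M ^ E * s ^ ((1 : ℝ) / m) := by
  have hM0 : 0 ≤ M := by linarith
  have h1 : g = (g ^ m) ^ ((1 : ℝ) / m) := by
    rw [← Real.rpow_mul hg, mul_one_div_cancel hm.ne', Real.rpow_one]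
  rw [h1]
  calc (g ^ m) ^ ((1 : ℝ) / m) ≤ (M ^ c * s) ^ ((1 : ℝ) / m) :=
        Real.rpow_le_rpow (Real.rpow_nonneg hg _) h (by positivity)
    _ = M ^ (c / m) * s ^ ((1 : ℝ) / m) := by
        rw [Real.mul_rpow (Real.rpow_nonneg hM0 _) hs, ← Real.rpow_mul hM0, mul_one_div]
    _ ≤ _ := by
        apply mul_le_mul_of_nonneg_right _ (Real.rpow_nonneg hs _)
        exact Real.rpow_le_rpow_of_exponent_le hM hE

theorem aux_e2 {ι : Type*} [DecidableEq ι] (s : Finset ι) (x : ι → ℝ) :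
    (∑ i ∈ s, x i) ^ 2 = ∑ i ∈ s, x i ^ 2 + 2 * ∑ A ∈ powersetCard 2 s, ∏ i ∈ A, x i := by
  induction s using Finset.induction_on with
  | empty =>
    have h : powersetCard 2 (∅ : Finset ι) = ∅ := powersetCard_eq_empty.2 (by simp)
    simp [h]
  | insert a s ha ih =>
    have h1 : ∑ A ∈ powersetCard 2 (insert a s), ∏ i ∈ A, x i
        = ∑ A ∈ powersetCard 2 s, ∏ i ∈ A, x i + x a * ∑ i ∈ s, x i := by
      rw [powersetCard_succ_insert ha, sum_union]
      · congr 1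
        rw [sum_image, mul_sum, powersetCard_one, sum_map]
        · apply sum_congr rfl
          intro i hi
          have : a ≠ i := by rintro rfl; exact ha hi
          simp [prod_pair this]
        · intro A hA B hB hAB
          have hA' : a ∉ A := fun h => ha ((mem_powersetCard.1 hA).1 h)
          have hB' : a ∉ B := fun h => ha ((mem_powersetCard.1 hB).1 h)
          rw [← erase_insert hA', ← erase_insert hB']
          rw [hAB]
      · rw [Finset.disjoint_left]
        intro A hA hB
        obtain ⟨B, hB, rfl⟩ := mem_image.1 hB
        exact ha ((mem_powersetCard.1 hA).1 (mem_insert_self _ _))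
    rw [h1, sum_insert ha, sum_insert ha]
    linear_combination ih

theorem aux_compl (n m : ℕ) (hm : m ≤ n) (y : Fin n → ℝ) (hy : ∀ i, y i ≠ 0) :
    esymmS n (n - m) y = (∏ i, y i) * esymmS n m (fun i => (y i)⁻¹) := by
  unfold esymmS
  rw [mul_sum]
  refine sum_nbij' (fun A => Aᶜ) (fun A => Aᶜ) ?_ ?_ ?_ ?_ ?_
  · intro A hA
    rw [mem_powersetCard_univ] at hA ⊢
    rw [card_compl, hA, Fintype.card_fin]; omega
  · intro A hA
    rw [mem_powersetCard_univ] at hA ⊢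
    rw [card_compl, hA, Fintype.card_fin]
  · intro A _; simp
  · intro A _; simp
  · intro A _
    have h0 : ∏ i ∈ Aᶜ, y i ≠ 0 := prod_ne_zero_iff.2 fun i _ => hy i
    rw [prod_inv_distrib, ← prod_mul_prod_compl A y]
    field_simp

theorem aux_smean_compl (n m : ℕ) (hm : m ≤ n) (y : Fin n → ℝ) (hy : ∀ i, y i ≠ 0) :
    smean n (n - m) y = (∏ i, y i) * smean n m (fun i => (y i)⁻¹) := by
  unfold smean
  rw [aux_compl n m hm y hy, Nat.choose_symm hm, mul_div_assoc]

theorem aux_smean_self (n : ℕ) (y : Fin n → ℝ) : smean n n y = ∏ i, y i := by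
  have : powersetCard n (univ : Finset (Fin n)) = {univ} := by
    have h := powersetCard_self (univ : Finset (Fin n))
    rwa [card_univ, Fintype.card_fin] at h
  simp [smean, esymmS, this]

theorem aux_amgm (n : ℕ) (hn : 4 ≤ n) (y : Fin n → ℝ) (hy : ∀ i, y i ≠ 0) :
    1 ≤ (|smean n n y| ^ ((1 : ℝ) / n)) ^ 2 *
      (n * (smean n 1 (fun i => (y i)⁻¹)) ^ 2 - (n - 1) * smean n 2 (fun i => (y i)⁻¹)) := by
  have hn' : (4 : ℝ) ≤ n := by exact_mod_cast hn
  have hn0 : (n : ℝ) ≠ 0 := by linarith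
  have hn1 : (n : ℝ) - 1 ≠ 0 := by linarith
  set x : Fin n → ℝ := fun i => (y i)⁻¹ with hx
  have h1 : smean n 1 x = (∑ i, x i) / n := by
    simp [smean, esymmS, powersetCard_one, sum_map]
  have h2 : (∑ A ∈ powersetCard 2 (univ : Finset (Fin n)), ∏ i ∈ A, x i)
      = (n * (n - 1) / 2) * smean n 2 x := by
    unfold smean esymmS
    rw [Nat.cast_choose_two]
    field_simp
  have h3 : (n : ℝ) * (smean n 1 x) ^ 2 - (n - 1) * smean n 2 x = (∑ i, x i ^ 2) / n := by
    have := aux_e2 (univ : Finset (Fin n)) x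
    rw [h2] at this
    rw [h1]
    field_simp
    linear_combination this
  have hP : 0 < |∏ i, y i| := abs_pos.2 (prod_ne_zero_iff.2 fun i _ => hy i)
  have h4 := Real.geom_mean_le_arith_mean (univ : Finset (Fin n)) (fun _ => (1 : ℝ))
    (fun i => x i ^ 2) (by simp) (by simp; omega) (fun i _ => sq_nonneg _)
  simp only [Real.rpow_one, sum_const, card_univ, Fintype.card_fin, nsmul_eq_mul, mul_one,
    one_mul] at h4
  have h5 : ∏ i, x i ^ 2 = (|∏ i, y i| ^ 2)⁻¹ := by
    rw [prod_pow, hx, prod_inv_distrib, sq_abs, inv_pow]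
  rw [h3, aux_smean_self]
  rw [h5] at h4
  have h6 : ((|∏ i, y i| ^ 2)⁻¹) ^ ((n : ℝ)⁻¹) = ((|∏ i, y i| ^ ((1 : ℝ) / n)) ^ 2)⁻¹ := by
    rw [Real.inv_rpow (by positivity), one_div, ← Real.rpow_natCast, ← Real.rpow_natCast,
      ← Real.rpow_mul hP.le, ← Real.rpow_mul hP.le, mul_comm]
  rw [h6] at h4
  have h7 : 0 < (|∏ i, y i| ^ ((1 : ℝ) / n)) ^ 2 := by positivity
  calc (1 : ℝ) = (|∏ i, y i| ^ ((1 : ℝ) / n)) ^ 2 * ((|∏ i, y i| ^ ((1 : ℝ) / n)) ^ 2)⁻¹ := by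
        rw [mul_inv_cancel₀ h7.ne']
    _ ≤ _ := mul_le_mul_of_nonneg_left h4 h7.le

theorem aux_log1 (t : ℝ) (ht : 4 ≤ t) : 1 / (t - 1) ≤ Real.log ((t - 1) / (t - 2)) := by
  have := Real.one_sub_inv_le_log_of_pos (x := (t - 1) / (t - 2))
    (div_pos (by linarith) (by linarith))
  refine le_trans (le_of_eq ?_) this
  have h1 : t - 1 ≠ 0 := by linarith
  have h2 : t - 2 ≠ 0 := by linarith
  field_simp
  ring

theorem aux_log2 (t : ℝ) (ht : 4 ≤ t) : 2 / (t - 2) ≤ Real.log ((t - 1) / (t - 3)) := by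
  have h2 : 0 < t - 3 := by linarith
  have h3 : 0 < t - 2 := by linarith
  have := Real.le_log_one_add_of_nonneg (x := 2 / (t - 3)) (by positivity)
  have e : 1 + 2 / (t - 3) = (t - 1) / (t - 3) := by field_simp; ring
  rw [e] at this
  refine le_trans (le_of_eq ?_) this
  field_simp
  ring

theorem aux_base (n : ℕ) (hn : 4 ≤ n) (y : Fin n → ℝ) (M : ℝ) (hM : 2 * (n : ℝ) ≤ M) :
    |smean n n y| ^ ((1 : ℝ) / n) ≤
      max (M ^ ((1 / 2 : ℝ) * Real.log (((n : ℝ) - 1) / ((n : ℝ) - 2))) *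
          |smean n (n - 1) y| ^ ((1 : ℝ) / ((n : ℝ) - 1)))
        (M ^ ((1 / 2 : ℝ) * Real.log (((n : ℝ) - 1) / ((n : ℝ) - 3))) *
          |smean n (n - 2) y| ^ ((1 : ℝ) / ((n : ℝ) - 2))) := by
  have hn' : (4 : ℝ) ≤ n := by exact_mod_cast hn
  have hn0 : (n : ℝ) ≠ 0 := by linarith
  have hM0 : 0 < M := by linarith
  by_cases hy : ∀ i, y i ≠ 0
  · have h := aux_amgm n hn y hy
    have h1 := aux_smean_compl n 1 (by omega) y hy
    have h2 := aux_smean_compl n 2 (by omega) y hy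
    set a := smean n 1 (fun i => (y i)⁻¹)
    set b := smean n 2 (fun i => (y i)⁻¹)
    rw [aux_smean_self] at h ⊢
    have hP : 0 < |∏ i, y i| := abs_pos.2 (prod_ne_zero_iff.2 fun i _ => hy i)
    set P := ∏ i, y i
    have hg : 0 < |P| ^ ((1 : ℝ) / n) := by positivity
    have hPg : |P| = (|P| ^ ((1 : ℝ) / n)) ^ n := by
      rw [← Real.rpow_natCast, ← Real.rpow_mul hP.le, one_div_mul_cancel hn0, Real.rpow_one]
    set g := |P| ^ ((1 : ℝ) / n)
    rw [h1, h2, abs_mul, abs_mul, hPg]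
    have key : 1 ≤ M * (g * |a|) ^ 2 ∨ 1 ≤ M * (g ^ 2 * |b|) := by
      by_contra! hc
      obtain ⟨c1, c2⟩ := hc
      have hb : -b ≤ |b| := neg_le_abs b
      have d1 : 2 * n * (g * |a|) ^ 2 < 1 :=
        lt_of_le_of_lt (mul_le_mul_of_nonneg_right hM (by positivity)) c1
      have d2 : 2 * n * (g ^ 2 * |b|) < 1 :=
        lt_of_le_of_lt (mul_le_mul_of_nonneg_right hM (by positivity)) c2
      rw [mul_pow, sq_abs] at d1
      have d3 : g ^ 2 * ((n - 1) * -b) ≤ g ^ 2 * (n * |b|) := by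
        apply mul_le_mul_of_nonneg_left _ (by positivity)
        have := abs_nonneg b
        nlinarith
      nlinarith
    rcases key with key | key
    · apply le_max_of_le_left
      apply aux_root_bound hg.le (by linarith) (c := 1 / 2) (by linarith) (by positivity)
      · have e1 : g ^ ((n : ℝ) - 1) = g ^ (n - 1) := by
          rw [← Real.rpow_natCast, Nat.cast_sub (by omega)]; simp
        have e2 : g ^ n = g ^ (n - 1) * g := by
          rw [← pow_succ]; congr 1; omega
        rw [e1, e2, ← Real.sqrt_eq_rpow]
        have : 1 ≤ √M * (g * |a|) := by
          rw [← one_le_sq_iff₀ (by positivity), mul_pow, Real.sq_sqrt hM0.le]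
          exact key
        calc g ^ (n - 1) = g ^ (n - 1) * 1 := by ring
          _ ≤ g ^ (n - 1) * (√M * (g * |a|)) := mul_le_mul_of_nonneg_left this (by positivity)
          _ = _ := by ring
      · rw [div_eq_mul_one_div]
        exact mul_le_mul_of_nonneg_left (aux_log1 _ hn') (by norm_num)
    · apply le_max_of_le_right
      apply aux_root_bound hg.le (by linarith) (c := 1) (by linarith) (by positivity)
      · have e1 : g ^ ((n : ℝ) - 2) = g ^ (n - 2) := by
          rw [← Real.rpow_natCast, Nat.cast_sub (by omega)]; simp
        have e2 : g ^ n = g ^ (n - 2) * g ^ 2 := by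
          rw [← pow_add]; congr 1; omega
        rw [e1, e2, Real.rpow_one]
        calc g ^ (n - 2) = g ^ (n - 2) * 1 := by ring
          _ ≤ g ^ (n - 2) * (M * (g ^ 2 * |b|)) := mul_le_mul_of_nonneg_left key (by positivity)
          _ = _ := by ring
      · have := aux_log2 _ hn'
        have e : (1 : ℝ) / (n - 2) = 1 / 2 * (2 / (n - 2)) := by ring
        rw [e]
        exact mul_le_mul_of_nonneg_left this (by norm_num)
  · push Not at hy
    obtain ⟨i, hi⟩ := hy
    have : smean n n y = 0 := by
      rw [aux_smean_self]; exact prod_eq_zero (mem_univ i) hi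
    rw [this, abs_zero, Real.zero_rpow (by positivity)]
    apply le_max_of_le_left
    positivity

theorem aux_esymmS_eq (n m : ℕ) (y : Fin n → ℝ) :
    esymmS n m y = (univ.val.map y).esymm m := by
  rw [Finset.esymm_map_val]; rfl

theorem aux_exists_fun (n : ℕ) (s : Multiset ℝ) (hs : s.card = n) :
    ∃ z : Fin n → ℝ, (univ : Finset (Fin n)).val.map z = s := by
  subst hs
  induction s using Quotient.inductionOn with
  | h l =>
    refine ⟨fun i => l.get i, ?_⟩
    exact (Fin.univ_val_map _).trans (congrArg _ (List.ofFn_get l))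

open Polynomial in
theorem aux_rolle (n : ℕ) (y : Fin (n + 1) → ℝ) :
    ∃ z : Fin n → ℝ, ∀ j ≤ n, smean n j z = smean (n + 1) j y := by
  set s : Multiset ℝ := (univ : Finset (Fin (n + 1))).val.map y with hs
  have hcard : s.card = n + 1 := by simp [hs]
  set p : ℝ[X] := (s.map fun t => X - C t).prod with hp
  have hpr : p.roots = s := roots_multiset_prod_X_sub_C s
  have hpd : p.natDegree = n + 1 := by
    rw [hp, natDegree_multiset_prod_X_sub_C_eq_card, hcard]
  have hcoeff : ∀ j ≤ n + 1, p.coeff (n + 1 - j) = (-1) ^ j * s.esymm j := by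
    intro j hj
    rw [hp, Multiset.prod_X_sub_C_coeff s (by omega), hcard]
    congr 2 <;> omega
  have hdd : p.derivative.natDegree = n := by
    rw [natDegree_derivative, hpd]; rfl
  have hr := card_roots_le_derivative p
  rw [hpr, hcard] at hr
  have hr2 : p.derivative.roots.card = n :=
    le_antisymm (hdd ▸ card_roots' _) (by omega)
  have hlead : p.derivative.leadingCoeff = n + 1 := by
    rw [leadingCoeff, hdd, coeff_derivative]
    have h0 : p.coeff (n + 1) = 1 := by simpa [Multiset.esymm] using hcoeff 0 (by omega)
    rw [h0, one_mul]
  obtain ⟨z, hz⟩ := aux_exists_fun n _ hr2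
  refine ⟨z, fun j hj => ?_⟩
  have h1 := coeff_eq_esymm_roots_of_card (p := p.derivative) (hr2.trans hdd.symm)
    (k := n - j) (by omega)
  rw [hdd, hlead, coeff_derivative] at h1
  have e1 : n - (n - j) = j := by omega
  have e2 : n - j + 1 = n + 1 - j := by omega
  rw [e1, e2, hcoeff j (by omega), Nat.cast_sub hj] at h1
  have h2 : s.esymm j * ((n : ℝ) - j + 1) = (n + 1) * p.derivative.roots.esymm j := by
    have h0 : ((-1 : ℝ)) ^ j ≠ 0 := by simp
    apply mul_left_cancel₀ h0
    linear_combination h1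
  unfold smean
  rw [aux_esymmS_eq, aux_esymmS_eq, hz, ← hs]
  have h3 : ((n + 1).choose j : ℝ) * ((n : ℝ) - j + 1) = (n.choose j) * (n + 1) := by
    have := Nat.choose_mul_succ_eq n j
    have h := congrArg (Nat.cast (R := ℝ)) this
    push_cast [Nat.cast_sub (show j ≤ n + 1 by omega)] at h
    linear_combination -h
  have c1 : ((n + 1).choose j : ℝ) ≠ 0 := by
    exact_mod_cast (Nat.choose_pos (by omega)).ne'
  have c2 : (n.choose j : ℝ) ≠ 0 := by
    exact_mod_cast (Nat.choose_pos hj).ne'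
  have c3 : (n : ℝ) + 1 ≠ 0 := by positivity
  rw [div_eq_div_iff c2 c1]
  apply mul_left_cancel₀ c3
  linear_combination (-((n + 1).choose j : ℝ)) * h2 + s.esymm j * h3

theorem aux_reduce (d m : ℕ) (y : Fin (m + d) → ℝ) :
    ∃ z : Fin m → ℝ, ∀ j ≤ m, smean m j z = smean (m + d) j y := by
  induction d with
  | zero => exact ⟨y, fun _ _ => rfl⟩
  | succ d ih =>
    obtain ⟨w, hw⟩ := aux_rolle (m + d) y
    obtain ⟨z, hz⟩ := ih w
    exact ⟨z, fun j hj => (hz j hj).trans (hw j (by omega))⟩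

theorem aux_base' (n : ℕ) (y : Fin n → ℝ) (m : ℕ) (hm : 4 ≤ m) (hmn : m ≤ n) :
    |smean n m y| ^ ((1 : ℝ) / m) ≤
      max ((2 * (n : ℝ)) ^ ((1 / 2 : ℝ) * Real.log (((m : ℝ) - 1) / ((m : ℝ) - 2))) *
          |smean n (m - 1) y| ^ ((1 : ℝ) / ((m : ℝ) - 1)))
        ((2 * (n : ℝ)) ^ ((1 / 2 : ℝ) * Real.log (((m : ℝ) - 1) / ((m : ℝ) - 3))) *
          |smean n (m - 2) y| ^ ((1 : ℝ) / ((m : ℝ) - 2))) := by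
  obtain ⟨d, rfl⟩ := Nat.exists_eq_add_of_le hmn
  obtain ⟨z, hz⟩ := aux_reduce d m y
  have := aux_base m hm z (2 * ((m + d : ℕ) : ℝ)) (by push_cast; linarith [(Nat.cast_nonneg d : (0 : ℝ) ≤ d)])
  rwa [hz m le_rfl, hz _ (by omega), hz _ (by omega)] at this

theorem aux_comb (M a b c s : ℝ) (hM : 0 < M) (ha : 0 < a) (hb : 0 < b) (hc : 0 < c) :
    M ^ ((1 / 2 : ℝ) * Real.log (a / b)) * (M ^ ((1 / 2 : ℝ) * Real.log (b / c)) * s)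
      = M ^ ((1 / 2 : ℝ) * Real.log (a / c)) * s := by
  rw [← mul_assoc, ← Real.rpow_add hM, Real.log_div ha.ne' hb.ne', Real.log_div hb.ne' hc.ne',
    Real.log_div ha.ne' hc.ne']
  congr 2
  ring

theorem sn_iterated_bound (n : ℕ) (hn : 4 ≤ n) (y : Fin n → ℝ) (k : ℕ) (hk : 1 ≤ k)
    (hkn : k ≤ n - 3) :
    |smean n n y| ^ ((1 : ℝ) / n) ≤
      max
        ((2 * (n : ℝ)) ^ ((1 / 2 : ℝ) * Real.log (((n : ℝ) - 1) / ((n : ℝ) - k - 1))) *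
          |smean n (n - k) y| ^ ((1 : ℝ) / ((n : ℝ) - k)))
        ((2 * (n : ℝ)) ^ ((1 / 2 : ℝ) * Real.log (((n : ℝ) - 1) / ((n : ℝ) - (k + 1) - 1))) *
          |smean n (n - (k + 1)) y| ^ ((1 : ℝ) / ((n : ℝ) - (k + 1)))) := by
  have hn' : (4 : ℝ) ≤ n := by exact_mod_cast hn
  induction k, hk using Nat.le_induction with
  | base =>
    have h := aux_base' n y n hn le_rfl
    have e1 : (n : ℝ) - (1 : ℕ) = n - 1 := by simp
    have e2 : (n : ℝ) - 1 - 1 = n - 2 := by ring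
    have e3 : (n : ℝ) - ((1 : ℕ) + 1) = n - 2 := by push_cast; ring
    have e4 : (n : ℝ) - 2 - 1 = n - 3 := by ring
    rw [e1, e2, e3, e4]
    exact h
  | succ k hk ih =>
    have ih := ih (by omega)
    rcases le_max_iff.1 ih with h | h
    · have hkn' : k + 4 ≤ n := by omega
      have hkr : (k : ℝ) + 4 ≤ n := by exact_mod_cast hkn'
      have hb := aux_base' n y (n - k) (by omega) (by omega)
      rw [Nat.cast_sub (by omega : k ≤ n)] at hb
      have hM : (0 : ℝ) < 2 * n := by linarith
      have hh := h.trans (mul_le_mul_of_nonneg_left hb (Real.rpow_nonneg hM.le _))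
      rw [mul_max_of_nonneg _ _ (Real.rpow_nonneg hM.le _),
        aux_comb _ _ _ _ _ hM (by linarith) (by linarith) (by linarith),
        aux_comb _ _ _ _ _ hM (by linarith) (by linarith) (by linarith)] at hh
      have e1 : (n : ℝ) - ((k + 1 : ℕ) : ℝ) = n - k - 1 := by push_cast; ring
      have e2 : (n : ℝ) - k - 1 - 1 = n - k - 2 := by ring
      have e3 : (n : ℝ) - (((k + 1 : ℕ) : ℝ) + 1) = n - k - 2 := by push_cast; ring
      have e4 : (n : ℝ) - k - 2 - 1 = n - k - 3 := by ring
      rw [e1, e2, e3, e4]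
      exact hh
    · apply le_max_of_le_left
      push_cast
      exact h
end

section
/- There exists an absolute constant C > 0 such that for every n ≥ 1, all real numbers y_1, …, y_n, and all integers 1 ≤ k < ℓ ≤ n, one has |S_ℓ(y)|^(1/ℓ) ≤ C · (k/ℓ)^(1/2) · max( |S_k(y)|^(1/k), |S_{k+1}(y)|^(1/(k+1)) ). -/
open Finset Real

/-- Derivatives of real-rooted polynomials are real-rooted. -/
lemma splits_derivative_real (p : Polynomial ℝ) (hp : p.Splits) : p.derivative.Splits := by
  rw [Polynomial.splits_iff_card_roots] at hp ⊢
  have h1 := Polynomial.card_roots_le_derivative p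
  have h2 := Polynomial.card_roots' p.derivative
  have h3 := Polynomial.natDegree_derivative_le p
  omega

lemma splits_iterate_derivative_real (p : Polynomial ℝ) (hp : p.Splits) (k : ℕ) :
    (Polynomial.derivative^[k] p).Splits := by
  induction k with
  | zero => simpa using hp
  | succ k ih =>
    rw [Function.iterate_succ_apply']
    exact splits_derivative_real _ ih

lemma splits_reverse_real (p : Polynomial ℝ) (hp : p.Splits) : p.reverse.Splits := by
  have key : ∀ m : Multiset ℝ, ((m.map fun a => Polynomial.X - Polynomial.C a).prod).reverse.Splits := by
    intro m
    induction m using Multiset.induction_on with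
    | empty =>
      simp only [Multiset.map_zero, Multiset.prod_zero]
      rw [← Polynomial.C_1, Polynomial.reverse_C]
      exact Polynomial.Splits.C _
    | cons a m ih =>
      rw [Multiset.map_cons, Multiset.prod_cons, Polynomial.reverse_mul_of_domain]
      refine Polynomial.Splits.mul ?_ ih
      apply Polynomial.Splits.of_natDegree_le_one
      exact (Polynomial.reverse_natDegree_le _).trans (Polynomial.natDegree_X_sub_C_le a)
  rw [hp.eq_prod_roots, Polynomial.reverse_mul_of_domain, Polynomial.reverse_C]
  exact Polynomial.Splits.mul (Polynomial.Splits.C _) (key _)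

/-- Truncation of the sequence of symmetric means to a window, as a real-rooted polynomial. -/
lemma exists_window_poly (n : ℕ) (y : Fin n → ℝ) (a b : ℕ) (hab : a ≤ b) (hb : b ≤ n) :
    ∃ p : Polynomial ℝ, p.Splits ∧ p.natDegree ≤ b - a ∧
      ∀ j ≤ b - a, p.coeff j = ((b - a).choose j : ℝ) * smean n (a + j) y := by
  set p0 : Polynomial ℝ := ∏ i : Fin n, (Polynomial.X + Polynomial.C (y i)) with hp0
  have s0 : p0.Splits := Polynomial.Splits.prod fun i _ => Polynomial.Splits.X_add_C _
  have d0 : p0.natDegree = n := by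
    rw [hp0, Polynomial.natDegree_prod_of_monic _ _ fun i _ => Polynomial.monic_X_add_C _]
    simp
  have m0 : p0.Monic := Polynomial.monic_prod_of_monic _ _ fun i _ => Polynomial.monic_X_add_C _
  have c0 : ∀ m ≤ n, p0.coeff (n - m) = esymmS n m y := by
    intro m hm
    rw [hp0, Finset.prod_X_add_C_coeff _ _ (by simp)]
    simp only [card_univ, Fintype.card_fin, esymmS]
    rw [Nat.sub_sub_self hm]
  set p1 := Polynomial.derivative^[n - b] p0 with hp1
  have s1 : p1.Splits := splits_iterate_derivative_real _ s0 _
  have c1 : ∀ m ≤ b, p1.coeff (b - m) = (n.factorial / b.factorial : ℝ) * (b.choose m) * smean n m y := by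
    intro m hm
    rw [hp1, Polynomial.coeff_iterate_derivative]
    rw [show b - m + (n - b) = n - m by omega, c0 m (by omega), nsmul_eq_mul, smean]
    rw [Nat.descFactorial_eq_div (by omega), show n - m - (n - b) = b - m by omega]
    rw [Nat.cast_div (Nat.factorial_dvd_factorial (by omega)) (by positivity)]
    rw [Nat.cast_choose ℝ hm, Nat.cast_choose ℝ (hm.trans hb)]
    have := Nat.factorial_pos
    field_simp
  have d1' : p1.natDegree ≤ b := by
    have := Polynomial.natDegree_iterate_derivative p0 (n - b)
    rw [d0] at this
    rw [hp1]; omega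
  have e0 : smean n 0 y = 1 := by simp [smean, esymmS]
  have d1 : p1.natDegree = b := by
    refine le_antisymm d1' (Polynomial.le_natDegree_of_ne_zero ?_)
    have := c1 0 (by omega)
    rw [Nat.sub_zero, e0] at this
    rw [this]
    simp
    constructor <;> exact Nat.factorial_ne_zero _
  set p2 := p1.reverse with hp2
  have s2 : p2.Splits := splits_reverse_real _ s1
  have c2 : ∀ m ≤ b, p2.coeff m = (n.factorial / b.factorial : ℝ) * (b.choose m) * smean n m y := by
    intro m hm
    rw [hp2, Polynomial.coeff_reverse, d1, Polynomial.revAt_le hm, c1 m hm]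
  have d2 : p2.natDegree ≤ b := by
    have := Polynomial.reverse_natDegree_le p1
    rw [hp2]; omega
  set p3 := Polynomial.derivative^[a] p2 with hp3
  have s3 : p3.Splits := splits_iterate_derivative_real _ s2 _
  have d3 : p3.natDegree ≤ b - a := by
    have := Polynomial.natDegree_iterate_derivative p2 a
    rw [hp3]; omega
  have c3 : ∀ j ≤ b - a, p3.coeff j = (n.factorial / (b-a).factorial : ℝ) * (((b-a).choose j) * smean n (a+j) y) := by
    intro j hj
    rw [hp3, Polynomial.coeff_iterate_derivative, c2 _ (by omega), nsmul_eq_mul]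
    rw [Nat.descFactorial_eq_div (by omega), show j + a - a = j by omega]
    rw [Nat.cast_div (Nat.factorial_dvd_factorial (by omega)) (by positivity)]
    rw [Nat.cast_choose ℝ hj, Nat.cast_choose ℝ (show j + a ≤ b by omega), add_comm j a,
      show b - (a + j) = b - a - j by omega]
    have := Nat.factorial_pos
    field_simp
  refine ⟨Polynomial.C ((b-a).factorial / n.factorial : ℝ) * p3, ?_, ?_, ?_⟩
  · exact Polynomial.Splits.mul (Polynomial.Splits.C _) s3
  · exact (Polynomial.natDegree_C_mul_le _ _).trans d3
  · intro j hj
    rw [Polynomial.coeff_C_mul, c3 j hj]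
    have := Nat.factorial_pos
    field_simp

/-- A Mahler-type product inequality. -/
lemma mahler_multiset (ρ G : ℝ) (hρ : 0 ≤ ρ) (hG : 0 < G) (m : Multiset ℝ) (hm : ∀ x ∈ m, 0 ≤ x) :
    (ρ + G) ^ m.card * (m.prod / G ^ m.card) ^ (G / (ρ + G)) ≤ (m.map fun x => ρ + x).prod := by
  induction m using Multiset.induction_on with
  | empty => simp
  | cons t m ih =>
    have ht : 0 ≤ t := hm t (by simp)
    have hm' : ∀ x ∈ m, 0 ≤ x := fun x hx => hm x (by simp [hx])
    have ih := ih hm'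
    have hP : 0 ≤ m.prod := Multiset.prod_nonneg hm'
    rw [Multiset.card_cons, Multiset.prod_cons, Multiset.map_cons, Multiset.prod_cons]
    have e : t * m.prod / G ^ (m.card + 1) = (t / G) * (m.prod / G ^ m.card) := by
      field_simp
      ring
    rw [e, Real.mul_rpow (by positivity) (by positivity)]
    have hs : 0 < ρ + G := by positivity
    have am := Real.geom_mean_le_arith_mean2_weighted (w₁ := ρ / (ρ + G)) (w₂ := G / (ρ + G)) (p₁ := 1) (p₂ := t / G)
      (by positivity) (by positivity) (by positivity) (by positivity) (by field_simp)
    rw [Real.one_rpow, one_mul] at am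
    have am2 : (ρ + G) * (t / G) ^ (G / (ρ + G)) ≤ ρ + t := by
      calc _ ≤ (ρ + G) * (ρ / (ρ + G) * 1 + G / (ρ + G) * (t / G)) := by gcongr
        _ = ρ + t := by field_simp
    calc _ = ((ρ + G) * (t / G) ^ (G / (ρ + G))) * ((ρ + G) ^ m.card * (m.prod / G ^ m.card) ^ (G / (ρ + G))) := by ring
      _ ≤ _ := by gcongr

/-- The key analytic property of the sequences we work with. -/
def PropJ (l : ℕ) (s : ℕ → ℝ) : Prop :=
  ∀ a b : ℕ, a < b → b ≤ l → ∀ q r : ℝ, 0 ≤ q → 0 ≤ r → s a * q ^ (b - a) ≤ s b →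
    (s a) ^ 2 * (1 + r ^ 2 * q ^ 2) ^ (b - a) ≤
      (∑ j ∈ range (b - a + 1), ((b - a).choose j : ℝ) * s (a + j) * r ^ j) ^ 2

lemma propJ_smean (n : ℕ) (y : Fin n → ℝ) : PropJ n (fun m => |smean n m y|) := by
  intro a b hab hb q r hq hr h
  simp only at h ⊢
  obtain ⟨p, hs, hd, hc⟩ := exists_window_poly n y a b hab.le hb
  set N := b - a with hN
  have hN0 : 0 < N := by omega
  have e0 : p.coeff 0 = smean n a y := by rw [hc 0 (by omega)]; simp
  have eN : p.coeff N = smean n b y := by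
    rw [hc N le_rfl]; simp [hN, Nat.add_sub_cancel' hab.le]
  rcases hq.eq_or_lt with hq0 | hq0
  · rw [← hq0]
    have h1 : |smean n a y| ≤ ∑ j ∈ range (N + 1), (N.choose j : ℝ) * |smean n (a + j) y| * r ^ j := by
      have := Finset.single_le_sum (f := fun j => (N.choose j : ℝ) * |smean n (a + j) y| * r ^ j)
        (s := range (N + 1)) (fun j _ => by positivity) (a := 0) (by simp)
      simpa using this
    simp only [ne_eq, OfNat.ofNat_ne_zero, not_false_eq_true, zero_pow, mul_zero, add_zero, one_pow, mul_one]
    gcongr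
  -- triangle inequality
  have tri : ‖(p.map (algebraMap ℝ ℂ)).eval (Complex.I * r)‖ ≤
      ∑ j ∈ range (N + 1), (N.choose j : ℝ) * |smean n (a + j) y| * r ^ j := by
    rw [Polynomial.eval_eq_sum_range' (n := N + 1) (by rw [Polynomial.natDegree_map]; omega)]
    refine (norm_sum_le _ _).trans (Finset.sum_le_sum fun j hj => ?_)
    have hj' : j ≤ N := by simpa [Nat.lt_succ_iff] using hj
    rw [Polynomial.coeff_map, hc j hj']
    simp [abs_of_nonneg hr]
  have main : (|smean n a y|) ^ 2 * (1 + r ^ 2 * q ^ 2) ^ N ≤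
      ‖(p.map (algebraMap ℝ ℂ)).eval (Complex.I * r)‖ ^ 2 := by
    by_cases ha : smean n a y = 0
    · rw [ha]; simp
    have hapos : 0 < |smean n a y| := abs_pos.mpr ha
    have hbpos : 0 < |smean n b y| := lt_of_lt_of_le (by positivity) h
    have hb0 : smean n b y ≠ 0 := abs_pos.mp hbpos
    have hdeg : p.natDegree = N :=
      le_antisymm hd (Polynomial.le_natDegree_of_ne_zero (by rw [eN]; exact hb0))
    have hlead : p.leadingCoeff = smean n b y := by rw [Polynomial.leadingCoeff, hdeg, eN]
    have hcard : p.roots.card = N := by rw [← hdeg]; exact Polynomial.splits_iff_card_roots.mp hs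
    set t : Multiset ℝ := p.roots.map fun x => x ^ 2 with ht
    have htc : t.card = N := by rw [ht, Multiset.card_map, hcard]
    have hfac := hs.eq_prod_roots
    have norm_eq : ‖(p.map (algebraMap ℝ ℂ)).eval (Complex.I * r)‖ ^ 2 =
        (smean n b y) ^ 2 * (t.map fun x => r ^ 2 + x).prod := by
      have : ∀ m : Multiset ℝ, ‖(((m.map fun a => Polynomial.X - Polynomial.C a).prod).map (algebraMap ℝ ℂ)).eval (Complex.I * r)‖ ^ 2 = ((m.map fun x => x ^ 2).map fun x => r ^ 2 + x).prod := by
        intro m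
        induction m using Multiset.induction_on with
        | empty => simp
        | cons c m ih =>
          simp only [Multiset.map_cons, Multiset.prod_cons, Polynomial.map_mul, Polynomial.eval_mul, norm_mul, mul_pow]
          rw [ih]
          congr 1
          rw [← Complex.normSq_eq_norm_sq]
          simp [Complex.normSq_apply]
          ring
      rw [hfac, Polynomial.map_mul, Polynomial.eval_mul, norm_mul, mul_pow, this, hlead]
      simp [ht]
    have prod_eq : (smean n b y) ^ 2 * t.prod = (smean n a y) ^ 2 := by
      have : ∀ m : Multiset ℝ, (((m.map fun a => Polynomial.X - Polynomial.C a).prod).coeff 0) ^ 2 = (m.map fun x => x ^ 2).prod := by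
        intro m
        induction m using Multiset.induction_on with
        | empty => simp
        | cons c m ih =>
          simp only [Multiset.map_cons, Multiset.prod_cons, Polynomial.mul_coeff_zero, mul_pow]
          rw [ih]; simp
      rw [← e0, hfac, Polynomial.mul_coeff_zero, mul_pow, this, hlead]
      simp [ht]
    have tpos : 0 < t.prod := by
      have : 0 < (smean n b y) ^ 2 := by positivity
      have h2 : 0 < (smean n a y) ^ 2 := by positivity
      rw [← prod_eq] at h2
      exact pos_of_mul_pos_right h2 this.le
    set G : ℝ := t.prod ^ ((1:ℝ) / N) with hGdef
    have hG : 0 < G := Real.rpow_pos_of_pos tpos _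
    have hGN : G ^ N = t.prod := by
      rw [hGdef, ← Real.rpow_natCast, ← Real.rpow_mul tpos.le]
      field_simp
      simp
    have mah := mahler_multiset (r ^ 2) G (by positivity) hG t (by
      intro x hx
      rw [ht, Multiset.mem_map] at hx
      obtain ⟨z, _, rfl⟩ := hx
      positivity)
    rw [htc, hGN, div_self tpos.ne', Real.one_rpow, mul_one] at mah
    have hGq : G * q ^ 2 ≤ 1 := by
      have : (G * q ^ 2) ^ N ≤ 1 ^ N := by
        rw [mul_pow, hGN, one_pow]
        have h2 : (smean n b y) ^ 2 * (t.prod * (q ^ 2) ^ N) ≤ (smean n b y) ^ 2 := by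
          rw [← mul_assoc, prod_eq]
          calc _ = (|smean n a y| * q ^ N) ^ 2 := by rw [mul_pow, sq_abs, ← pow_mul, ← pow_mul, mul_comm 2 N]
            _ ≤ |smean n b y| ^ 2 := by gcongr
            _ = _ := sq_abs _
        have : 0 < (smean n b y) ^ 2 := by positivity
        exact le_of_mul_le_mul_left (by linarith) this
      exact le_of_pow_le_pow_left₀ hN0.ne' (by norm_num) this
    rw [norm_eq, sq_abs, ← prod_eq]
    calc _ = (smean n b y) ^ 2 * (G * (1 + r ^ 2 * q ^ 2)) ^ N := by rw [mul_pow, hGN]; ring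
      _ ≤ (smean n b y) ^ 2 * (r ^ 2 + G) ^ N := by
        gcongr
        nlinarith [mul_le_mul_of_nonneg_left hGq (sq_nonneg r)]
      _ ≤ _ := by gcongr
  exact main.trans (by gcongr)

lemma PropJ.scale {l : ℕ} {s : ℕ → ℝ} (h : PropJ l s) (c : ℝ) (hc : 0 < c) :
    PropJ l (fun m => s m * c ^ m) := by
  intro a b hab hb q r hq hr hh
  simp only at hh ⊢
  have hbe : c ^ b = c ^ a * c ^ (b - a) := by rw [← pow_add, Nat.add_sub_cancel' hab.le]
  have h1 := h a b hab hb (q / c) (r * c) (by positivity) (by positivity) (by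
    rw [hbe] at hh
    have hca : 0 < c ^ a := by positivity
    have hcb : 0 < c ^ (b - a) := by positivity
    rw [div_pow, mul_div_assoc', div_le_iff₀ hcb]
    refine le_of_mul_le_mul_left ?_ hca
    linarith)
  have e1 : (r * c) ^ 2 * (q / c) ^ 2 = r ^ 2 * q ^ 2 := by field_simp
  rw [e1] at h1
  have e2 : ∑ j ∈ range (b - a + 1), ((b - a).choose j : ℝ) * (s (a + j) * c ^ (a + j)) * r ^ j =
      c ^ a * ∑ j ∈ range (b - a + 1), ((b - a).choose j : ℝ) * s (a + j) * (r * c) ^ j := by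
    rw [Finset.mul_sum]
    refine Finset.sum_congr rfl fun j _ => ?_
    rw [pow_add, mul_pow]; ring
  rw [e2, mul_pow (c ^ a)]
  calc _ = (c ^ a) ^ 2 * (s a ^ 2 * (1 + r ^ 2 * q ^ 2) ^ (b - a)) := by ring
    _ ≤ _ := by gcongr

/-- Existence of a supporting line of the Newton polygon at the gap `(k, k+1)`. -/
lemma hull_exists (u : ℕ → ℝ) (hu : ∀ m, 0 ≤ u m) (a k b : ℕ) (hak : a ≤ k) (hkb : k < b)
    (ha : 0 < u a) (hb : 0 < u b) :
    ∃ c : ℝ, 0 < c ∧ ∃ H : ℝ, ∃ a' b' : ℕ, a ≤ a' ∧ a' ≤ k ∧ k < b' ∧ b' ≤ b ∧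
      u a' * c ^ a' = H ∧ u b' * c ^ b' = H ∧ ∀ m, a ≤ m → m ≤ b → u m * c ^ m ≤ H := by
  have n1 : (Icc a k).Nonempty := ⟨a, by simp [hak]⟩
  have n2 : (Icc (k + 1) b).Nonempty := ⟨b, by simp; omega⟩
  set F : ℝ → ℝ := fun c => (Icc a k).sup' n1 (fun m => u m * c ^ m) with hF
  set G : ℝ → ℝ := fun c => (Icc (k + 1) b).sup' n2 (fun m => u m * c ^ m) with hG
  have cF : Continuous F := Continuous.finset_sup'_apply n1 (fun m _ => by fun_prop)
  have cG : Continuous G := Continuous.finset_sup'_apply n2 (fun m _ => by fun_prop)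
  set U : ℝ := ∑ m ∈ Icc a b, u m with hU
  have hUm : ∀ m, a ≤ m → m ≤ b → u m ≤ U := fun m h1 h2 =>
    Finset.single_le_sum (f := u) (fun i _ => hu i) (by simp [h1, h2])
  have hUpos : 0 < U := lt_of_lt_of_le ha (hUm a le_rfl (by omega))
  -- small parameter
  set c0 : ℝ := u a / U with hc0
  have c0pos : 0 < c0 := by positivity
  have c0le : c0 ≤ 1 := (div_le_one hUpos).mpr (hUm a le_rfl (by omega))
  have h0 : G c0 ≤ F c0 := by
    have l1 : u a * c0 ^ k ≤ F c0 := by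
      refine le_trans ?_ (Finset.le_sup' (fun m => u m * c0 ^ m) (show a ∈ Icc a k by simp [hak]))
      have := pow_le_pow_of_le_one c0pos.le c0le hak
      gcongr u a * ?_
    refine le_trans (Finset.sup'_le n2 _ fun m hm => ?_) l1
    rw [Finset.mem_Icc] at hm
    calc u m * c0 ^ m ≤ U * c0 ^ (k + 1) := by
          have := pow_le_pow_of_le_one c0pos.le c0le hm.1
          have := hUm m (by omega) hm.2
          gcongr
      _ = u a * c0 ^ k := by rw [hc0, pow_succ]; field_simp
  set c1 : ℝ := U / u b with hc1
  have c1ge : 1 ≤ c1 := (one_le_div hb).mpr (hUm b (by omega) le_rfl)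
  have h1 : F c1 ≤ G c1 := by
    have l1 : u b * c1 ^ (k + 1) ≤ G c1 := by
      refine le_trans ?_ (Finset.le_sup' (fun m => u m * c1 ^ m) (show b ∈ Icc (k+1) b by simp; omega))
      have := pow_le_pow_right₀ c1ge (show k + 1 ≤ b by omega)
      gcongr u b * ?_
    refine le_trans (Finset.sup'_le n1 _ fun m hm => ?_) l1
    rw [Finset.mem_Icc] at hm
    calc u m * c1 ^ m ≤ U * c1 ^ k := by
          have := pow_le_pow_right₀ c1ge hm.2
          have := hUm m (by omega) (by omega)
          gcongr
      _ = u b * c1 ^ (k + 1) := by rw [hc1, pow_succ]; field_simp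
  obtain ⟨c, hc, hceq⟩ : ∃ c ∈ Set.Icc c0 c1, G c - F c = 0 := by
    have := intermediate_value_Icc (c0le.trans c1ge) (cG.sub cF).continuousOn
    exact this ⟨by simp; linarith, by simp; linarith⟩
  obtain ⟨a', ha', ea⟩ := Finset.exists_mem_eq_sup' n1 (fun m => u m * c ^ m)
  obtain ⟨b', hb', eb⟩ := Finset.exists_mem_eq_sup' n2 (fun m => u m * c ^ m)
  rw [Finset.mem_Icc] at ha' hb'
  have ea' : F c = u a' * c ^ a' := ea
  have eb' : G c = u b' * c ^ b' := eb
  refine ⟨c, c0pos.trans_le hc.1, F c, a', b', ha'.1, ha'.2, by omega, hb'.2, ea'.symm, by linarith, ?_⟩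
  intro m h1 h2
  by_cases hm : m ≤ k
  · exact Finset.le_sup' (fun m => u m * c ^ m) (show m ∈ Icc a k by simp [hm, h1])
  · have : u m * c ^ m ≤ G c := Finset.le_sup' (fun m => u m * c ^ m) (show m ∈ Icc (k+1) b by simp; omega)
    linarith

lemma sum_choose_pow (N : ℕ) (x : ℝ) :
    ∑ j ∈ range (N + 1), (N.choose j : ℝ) * (x ^ j + x ^ (N - j)) = 2 * (1 + x) ^ N := by
  have h1 : ∑ j ∈ range (N + 1), (N.choose j : ℝ) * x ^ j = (1 + x) ^ N := by
    rw [add_comm (1 : ℝ), add_pow]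
    refine Finset.sum_congr rfl fun j _ => ?_
    simp [mul_comm]
  have h2 : ∑ j ∈ range (N + 1), (N.choose j : ℝ) * x ^ (N - j) = (1 + x) ^ N := by
    rw [add_pow]
    refine Finset.sum_congr rfl fun j _ => ?_
    simp [mul_comm]
  simp_rw [mul_add]
  rw [Finset.sum_add_distrib, h1, h2]; ring

/-- Local stage: two consecutive terms inside a window cannot both be small. -/
lemma local_stage (l k : ℕ) : ∀ (N : ℕ) (s : ℕ → ℝ), (∀ m, 0 ≤ s m) → PropJ l s →
    ∀ (a b : ℕ) (g : ℝ), a ≤ k → k < b → b ≤ l → b ≤ a + N → 0 < g → g ≤ s a → g ≤ s b →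
    g * (1/9) ^ N ≤ max (s k) (s (k + 1)) := by
  intro N
  induction N using Nat.strong_induction_on with
  | _ N IH =>
  intro s hs hJ a b g hak hkb hbl hN hg hga hgb
  obtain ⟨c, hc, H, a', b', h1, h2, h3, h4, h5, h6, h7⟩ :=
    hull_exists s hs a k b hak hkb (hg.trans_le hga) (hg.trans_le hgb)
  set u : ℕ → ℝ := fun m => s m * c ^ m with hu
  have huJ : PropJ l u := hJ.scale c hc
  have hu0 : ∀ m, 0 ≤ u m := fun m => mul_nonneg (hs m) (by positivity)
  have hHa : g * c ^ a ≤ H := le_trans (by gcongr) (h7 a le_rfl (by omega))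
  have hHb : g * c ^ b ≤ H := le_trans (by gcongr) (h7 b (by omega) le_rfl)
  have hHm : ∀ m, a ≤ m → m ≤ b → g * c ^ m ≤ H := by
    intro m hm1 hm2
    rcases le_total c 1 with hc1 | hc1
    · refine le_trans ?_ hHa
      have := pow_le_pow_of_le_one hc.le hc1 hm1
      gcongr
    · refine le_trans ?_ hHb
      have := pow_le_pow_right₀ hc1 hm2
      gcongr
  have hH : 0 < H := lt_of_lt_of_le (by positivity) hHa
  have ninth : (0:ℝ) < (1/9)^N := by positivity
  have ninth1 : ((1:ℝ)/9)^N ≤ 1 := pow_le_one₀ (by norm_num) (by norm_num)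
  -- it suffices to work with u
  suffices hmain : H * (1/9) ^ N ≤ u k ∨ H * (1/9) ^ N ≤ u (k + 1) by
    rcases hmain with hm | hm
    · refine le_trans ?_ (le_max_left _ _)
      have hck : 0 < c ^ k := by positivity
      refine le_of_mul_le_mul_right ?_ hck
      calc _ = (g * c ^ k) * (1/9)^N := by ring
        _ ≤ H * (1/9)^N := by gcongr; exact hHm k hak (by omega)
        _ ≤ _ := hm
    · refine le_trans ?_ (le_max_right _ _)
      have hck : 0 < c ^ (k + 1) := by positivity
      refine le_of_mul_le_mul_right ?_ hck
      calc _ = (g * c ^ (k + 1)) * (1/9)^N := by ring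
        _ ≤ H * (1/9)^N := by gcongr; exact hHm (k + 1) (by omega) (by omega)
        _ ≤ _ := hm
  by_cases hka : a' = k
  · left; subst hka; show _ ≤ s a' * c ^ a'; rw [h5]; nlinarith
  by_cases hkb' : b' = k + 1
  · right; subst hkb'; show _ ≤ s (k+1) * c ^ (k+1); rw [h6]; nlinarith
  set M := b' - a' with hM
  have hM3 : 3 ≤ M := by omega
  have hMN : M ≤ N := by omega
  have ua : u a' = H := h5
  have ub : u b' = H := h6
  have ule : ∀ m, a ≤ m → m ≤ b → u m ≤ H := h7
  have hJ1 := huJ a' b' (by omega) (by omega) 1 1 (by norm_num) (by norm_num) (by rw [ua, ub]; simp)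
  rw [← hM, ua] at hJ1
  obtain ⟨j, hj0, hjM, hj⟩ : ∃ j, 0 < j ∧ j < M ∧ H * ((1/9)^j + (1/9)^(M-j)) ≤ u (a' + j) := by
    by_contra hcon
    push Not at hcon
    have hle : ∑ j ∈ range (M + 1), (M.choose j : ℝ) * u (a' + j) * 1 ^ j ≤
        H * (2 * (1 + 1/9) ^ M) := by
      rw [← sum_choose_pow, Finset.mul_sum]
      refine Finset.sum_le_sum fun j hj => ?_
      have hj' : j ≤ M := by simpa [Nat.lt_succ_iff] using hj
      rw [one_pow, mul_one]
      have key : u (a' + j) ≤ H * ((1/9)^j + (1/9)^(M-j)) := by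
        have p1 : (0:ℝ) < (1/9)^j := by positivity
        have p2 : (0:ℝ) < (1/9)^(M-j) := by positivity
        rcases Nat.eq_zero_or_pos j with h | h
        · subst h
          simp only [add_zero, ua, pow_zero]
          nlinarith
        rcases hj'.eq_or_lt with h' | h'
        · have : u (a' + j) = H := by rw [h', hM, Nat.add_sub_cancel' (by omega), ub]
          rw [this, h', Nat.sub_self, pow_zero]
          rw [h'] at p1
          nlinarith
        · exact (hcon j h h').le
      calc _ ≤ (M.choose j : ℝ) * (H * ((1/9)^j + (1/9)^(M-j))) := by gcongr
        _ = _ := by ring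
    have hnn : 0 ≤ ∑ j ∈ range (M + 1), (M.choose j : ℝ) * u (a' + j) * 1 ^ j :=
      Finset.sum_nonneg fun j _ => by have := hu0 (a' + j); positivity
    have h8 := hJ1.trans (pow_le_pow_left₀ hnn hle 2)
    have h9 : (2:ℝ) ^ M ≤ 4 * (100/81) ^ M := by
      have hH2 : 0 < H ^ 2 := by positivity
      refine le_of_mul_le_mul_left ?_ hH2
      calc H ^ 2 * 2 ^ M = H ^ 2 * (1 + 1 ^ 2 * 1 ^ 2) ^ M := by norm_num
        _ ≤ _ := h8
        _ = H ^ 2 * (4 * (100/81)^M) := by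
          rw [mul_pow, mul_pow, ← pow_mul, mul_comm M 2, pow_mul]; norm_num
    have h10 : ((81:ℝ)/50) ^ M ≤ 4 := by
      have : (2:ℝ)^M = (81/50)^M * (100/81)^M := by rw [← mul_pow]; norm_num
      rw [this] at h9
      exact le_of_mul_le_mul_right h9 (by positivity)
    have h11 : ((81:ℝ)/50) ^ 3 ≤ (81/50) ^ M := pow_le_pow_right₀ (by norm_num) hM3
    norm_num at h11 h10
    linarith
  have p1 : (0:ℝ) < (1/9)^j := by positivity
  have p2 : (0:ℝ) < (1/9)^(M-j) := by positivity
  have pMN : ((1:ℝ)/9)^N ≤ (1/9)^M := pow_le_pow_of_le_one (by norm_num) (by norm_num) hMN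
  have fin : H * (1/9)^M ≤ max (u k) (u (k + 1)) := by
    by_cases hm : a' + j ≤ k
    · have := IH (M - j) (by omega) u hu0 huJ (a' + j) b' (H * (1/9)^j) hm h3 (by omega) (by omega)
        (by positivity) (by nlinarith) (by
          rw [ub]
          have : ((1:ℝ)/9)^j ≤ 1 := pow_le_one₀ (by norm_num) (by norm_num)
          nlinarith)
      refine le_trans (le_of_eq ?_) this
      rw [mul_assoc, ← pow_add, Nat.add_sub_cancel' hjM.le]
    · have := IH j (by omega) u hu0 huJ a' (a' + j) (H * (1/9)^(M-j)) h2 (by omega) (by omega) (by omega)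
        (by positivity) (by
          rw [ua]
          have : ((1:ℝ)/9)^(M-j) ≤ 1 := pow_le_one₀ (by norm_num) (by norm_num)
          nlinarith) (by nlinarith)
      refine le_trans (le_of_eq ?_) this
      rw [mul_assoc, ← pow_add, Nat.sub_add_cancel hjM.le]
  have fin2 : H * (1/9)^N ≤ max (u k) (u (k + 1)) := le_trans (by gcongr) fin
  exact le_max_iff.mp fin2

lemma pow_le_factorial_three (x m k : ℕ) : ((x : ℝ) * k) ^ m ≤ m.factorial * 3 ^ (x * k) := by
  have h := Real.pow_div_factorial_le_exp (x := (x : ℝ) * k) (by positivity) m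
  have hf : (0:ℝ) < m.factorial := by positivity
  rw [div_le_iff₀ hf] at h
  have h3 : Real.exp ((x : ℝ) * k) ≤ 3 ^ (x * k) := by
    have : (x : ℝ) * k = ((x * k : ℕ) : ℝ) * 1 := by push_cast; ring
    rw [this, Real.exp_nat_mul]
    gcongr
    exact Real.exp_one_lt_three.le
  calc _ ≤ _ := h
    _ ≤ 3 ^ (x * k) * (m.factorial : ℝ) := by gcongr
    _ = _ := by ring

lemma two_pow_le_one_add_div (p N : ℕ) (hN : 0 < N) (hp : p ≤ N) :
    (2:ℝ) ^ p ≤ (1 + (p : ℝ) / N) ^ N := by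
  have hN' : (0:ℝ) < N := by exact_mod_cast hN
  have h1 : (2:ℝ) ^ ((p : ℝ) / N) ≤ 1 + (p : ℝ) / N := by
    have := rpow_one_add_le_one_add_mul_self (s := 1) (p := (p : ℝ) / N) (by norm_num) (by positivity)
      ((div_le_one hN').mpr (by exact_mod_cast hp))
    norm_num at this
    exact this
  calc (2:ℝ) ^ p = ((2:ℝ) ^ ((p : ℝ) / N)) ^ N := by
        rw [← Real.rpow_natCast, ← Real.rpow_natCast, ← Real.rpow_mul (by norm_num)]
        congr 1
        field_simp
    _ ≤ _ := by gcongr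

/-- Far stage: we can find a large term at an index comparable with `k`. -/
lemma far_stage (l k : ℕ) (hk : 1 ≤ k) (s : ℕ → ℝ) (hs : ∀ m, 0 ≤ s m) (hJ : PropJ l s) (H : ℝ) (hH : 0 < H)
    (a b : ℕ) (hak : a ≤ k) (hkb : k < b) (hbl : b ≤ l)
    (ha : s a ^ 2 = H ^ 2 * a.factorial) (hb : s b ^ 2 = H ^ 2 * b.factorial)
    (hle : ∀ m ≤ l, s m ^ 2 ≤ H ^ 2 * m.factorial) :
    ∃ m, k < m ∧ m ≤ 1538 * k ∧ m ≤ l ∧ H ^ 2 * ((1/3) ^ (384 * k)) * m.factorial ≤ s m ^ 2 := by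
  by_contra hcon
  push Not at hcon
  have hone : ((1:ℝ)/3) ^ (384 * k) ≤ 1 := pow_le_one₀ (by norm_num) (by norm_num)
  have hbB : 1538 * k < b := by
    by_contra h
    have := hcon b hkb (by omega) hbl
    rw [hb] at this
    have h2 : H ^ 2 * ((1/3) ^ (384 * k)) * b.factorial ≤ H ^ 2 * 1 * b.factorial := by gcongr
    linarith
  set N := b - a with hN
  have hNk : 1537 * k < N := by omega
  have hN0 : 0 < N := by omega
  have hNr : (0:ℝ) < N := by exact_mod_cast hN0
  set q : ℝ := √((N:ℝ) / 3) with hq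
  set r : ℝ := √(48 * k) / N with hr
  have hq2 : q ^ 2 = (N:ℝ) / 3 := Real.sq_sqrt (by positivity)
  have hr2 : r ^ 2 = 48 * k / (N:ℝ)^2 := by rw [hr, div_pow, Real.sq_sqrt (by positivity)]
  have hrq : r ^ 2 * q ^ 2 = ((16 * k : ℕ) : ℝ) / N := by
    rw [hq2, hr2]; push_cast; field_simp; norm_num
  have hsapos : 0 < s a := by
    rcases (hs a).eq_or_lt with h | h
    · rw [← h] at ha
      have : 0 < H ^ 2 * (a.factorial : ℝ) := by positivity
      simp at ha
      rcases ha with h | h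
      · exact absurd h hH.ne'
      · exact absurd h (Nat.factorial_ne_zero _)
    · exact h
  have hcond : s a * q ^ N ≤ s b := by
    refine le_of_pow_le_pow_left₀ (n := 2) (by norm_num) (hs b) ?_
    rw [mul_pow, ← pow_mul, mul_comm N 2, pow_mul, hq2, ha, hb, div_pow]
    have h1 : (N:ℝ) ^ N ≤ N.factorial * 3 ^ N := by
      have := pow_le_factorial_three 1 N N
      simpa using this
    have h2 : (a.factorial : ℝ) * N.factorial ≤ b.factorial := by
      have := Nat.factorial_mul_factorial_dvd_factorial_add a N
      rw [hN, Nat.add_sub_cancel' (by omega)] at this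
      exact_mod_cast Nat.le_of_dvd (Nat.factorial_pos _) this
    calc H ^ 2 * (a.factorial : ℝ) * ((N:ℝ)^N / 3 ^ N) ≤ H ^ 2 * a.factorial * (N.factorial * 3 ^ N / 3 ^ N) := by
          gcongr
      _ = H ^ 2 * (a.factorial * N.factorial) := by field_simp
      _ ≤ _ := by gcongr
  have hmain := hJ a b (by omega) hbl q r (by positivity) (by positivity) hcond
  rw [← hN, hrq] at hmain
  have h2pow := two_pow_le_one_add_div (16 * k) N hN0 (by omega)
  -- termwise bound
  have hterm : ∀ j ∈ range (N + 1), (N.choose j : ℝ) * s (a + j) * r ^ j ≤ s a * 48 ^ k * (1/2) ^ j := by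
    intro j hj
    have hjN : j ≤ N := by simpa [Nat.lt_succ_iff] using hj
    refine le_of_pow_le_pow_left₀ (n := 2) (by norm_num) (by positivity) ?_
    -- reduce
    have hch : (N.choose j : ℝ) ≤ (N:ℝ) ^ j / j.factorial := Nat.choose_le_pow_div j N
    have hfac : ((a + j).factorial : ℝ) ≤ a.factorial * j.factorial * 2 ^ (a + j) := by
      have h1 := Nat.add_choose_mul_factorial_mul_factorial a j
      have h2 := Nat.choose_le_two_pow (a + j) j
      have : (a + j).factorial ≤ 2 ^ (a + j) * a.factorial * j.factorial := by
        rw [← h1]; gcongr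
      have h3 : ((a + j).factorial : ℝ) ≤ 2 ^ (a + j) * a.factorial * j.factorial := by exact_mod_cast this
      linarith
    -- the weighted bound for s (a+j)
    have hdelta : ∃ d : ℝ, 0 ≤ d ∧ s (a + j) ^ 2 ≤ H ^ 2 * d * (a + j).factorial ∧
        d * (2 ^ k * ((384 * k) ^ j / j.factorial)) ≤ 2304 ^ k := by
      have hf : (0:ℝ) < j.factorial := by positivity
      by_cases c1 : a + j ≤ k
      · refine ⟨1, by norm_num, by simpa using hle (a + j) (by omega), ?_⟩
        have h1 := pow_le_factorial_three 1 j k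
        simp only [Nat.cast_one, one_mul] at h1
        have h2 : (384:ℝ) ^ j ≤ 384 ^ k := pow_le_pow_right₀ (by norm_num) (by omega)
        have h3 : ((k:ℝ) ^ j / j.factorial) ≤ 3 ^ k := by rw [div_le_iff₀ hf]; linarith
        calc (1:ℝ) * (2 ^ k * ((384 * k) ^ j / j.factorial)) = 2 ^ k * (384 ^ j * (k ^ j / j.factorial)) := by
              rw [mul_pow]; ring
          _ ≤ 2 ^ k * (384 ^ k * 3 ^ k) := by gcongr
          _ = 2304 ^ k := by rw [← mul_pow, ← mul_pow]; norm_num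
      by_cases c2 : a + j ≤ 1538 * k
      · refine ⟨(1/3) ^ (384 * k), by positivity, (hcon (a + j) (by omega) c2 (by omega)).le, ?_⟩
        have h1 := pow_le_factorial_three 384 j k
        have h3 : ((384 * (k:ℝ)) ^ j / j.factorial) ≤ 3 ^ (384 * k) := by
          rw [div_le_iff₀ hf]; push_cast at h1; linarith
        calc ((1:ℝ)/3) ^ (384 * k) * (2 ^ k * ((384 * k) ^ j / j.factorial))
            ≤ (1/3) ^ (384 * k) * (2 ^ k * 3 ^ (384 * k)) := by gcongr
          _ = 2 ^ k := by
            rw [mul_comm, mul_assoc, ← mul_pow]; norm_num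
          _ ≤ 2304 ^ k := by gcongr; norm_num
      · refine ⟨1, by norm_num, by simpa using hle (a + j) (by omega), ?_⟩
        have h1 := pow_le_factorial_three 768 j k
        have h3 : ((768 * (k:ℝ)) ^ j / j.factorial) ≤ 3 ^ (768 * k) := by
          rw [div_le_iff₀ hf]; push_cast at h1; linarith
        have h4 : (3:ℝ) ^ (768 * k) ≤ 2 ^ j := by
          calc (3:ℝ) ^ (768 * k) ≤ 4 ^ (768 * k) := by gcongr; norm_num
            _ = 2 ^ (2 * (768 * k)) := by rw [pow_mul 2 2]; norm_num
            _ ≤ 2 ^ j := pow_le_pow_right₀ (by norm_num) (by omega)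
        have h5 : (384 * (k:ℝ)) ^ j / j.factorial * 2 ^ j ≤ 1 * 2 ^ j := by
          calc _ = (768 * (k:ℝ)) ^ j / j.factorial := by
                rw [show (768:ℝ) * k = 384 * k * 2 by ring, mul_pow (384 * (k:ℝ)) 2 j]; ring
            _ ≤ 1 * 2 ^ j := by linarith
        have h6 := le_of_mul_le_mul_right h5 (by positivity)
        calc (1:ℝ) * (2 ^ k * ((384 * k) ^ j / j.factorial)) ≤ 1 * (2 ^ k * 1) := by gcongr
          _ ≤ 2304 ^ k := by rw [one_mul, mul_one]; gcongr; norm_num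
    obtain ⟨d, hd0, hd1, hd2⟩ := hdelta
    have hf : (0:ℝ) < j.factorial := by positivity
    have h2a : (2:ℝ) ^ (a + j) ≤ 2 ^ k * 2 ^ j := by
      rw [pow_add]; gcongr; norm_num
    calc ((N.choose j : ℝ) * s (a + j) * r ^ j) ^ 2
        = (N.choose j : ℝ) ^ 2 * s (a + j) ^ 2 * (r ^ 2) ^ j := by rw [mul_pow, mul_pow, ← pow_mul, ← pow_mul, mul_comm j 2]
      _ ≤ ((N:ℝ) ^ j / j.factorial) ^ 2 * (H ^ 2 * d * (a.factorial * j.factorial * (2 ^ k * 2 ^ j))) * (48 * k / (N:ℝ)^2) ^ j := by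
          rw [hr2]
          gcongr
          exact hd1.trans (by gcongr; exact hfac.trans (by gcongr))
      _ = (H ^ 2 * a.factorial) * (d * (2 ^ k * ((384 * k) ^ j / j.factorial))) * (1/4) ^ j := by
          rw [show (384:ℝ) * k = 48 * k * (2 * 4) by ring, mul_pow (48 * (k:ℝ)), mul_pow (2:ℝ) 4 j, div_pow, div_pow, div_pow]
          rw [← pow_mul, ← pow_mul, mul_comm 2 j]
          field_simp
          norm_num
      _ ≤ (H ^ 2 * a.factorial) * 2304 ^ k * (1/4) ^ j := by gcongr
      _ = (s a * 48 ^ k * (1/2) ^ j) ^ 2 := by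
          rw [mul_pow, mul_pow, ha, ← pow_mul, ← pow_mul, mul_comm k 2, mul_comm j 2, pow_mul, pow_mul]
          norm_num
  have hsum : ∑ j ∈ range (N + 1), (N.choose j : ℝ) * s (a + j) * r ^ j ≤ s a * 48 ^ k * 2 := by
    refine (Finset.sum_le_sum hterm).trans ?_
    rw [← Finset.mul_sum]
    gcongr
    exact sum_geometric_two_le (N + 1)
  have hnn : 0 ≤ ∑ j ∈ range (N + 1), (N.choose j : ℝ) * s (a + j) * r ^ j :=
    Finset.sum_nonneg fun j _ => by have := hs (a + j); positivity
  have h8 := hmain.trans (pow_le_pow_left₀ hnn hsum 2)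
  have h9 : (2:ℝ) ^ (16 * k) ≤ 4 * 2304 ^ k := by
    have hp : 0 < s a ^ 2 := by positivity
    refine le_of_mul_le_mul_left ?_ hp
    calc _ ≤ s a ^ 2 * (1 + ((16 * k : ℕ) : ℝ) / N) ^ N := by gcongr
      _ ≤ _ := h8
      _ = _ := by
        rw [mul_pow, mul_pow, ← pow_mul, mul_comm k 2, pow_mul]; norm_num; ring
  have h10 : (4:ℝ) * 2304 ^ k < 2 ^ (16 * k) := by
    rw [pow_mul]
    have e1 : (4:ℝ) ≤ 4 ^ k := by
      calc (4:ℝ) = 4 ^ 1 := by norm_num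
        _ ≤ 4 ^ k := pow_le_pow_right₀ (by norm_num) hk
    calc (4:ℝ) * 2304 ^ k ≤ 4 ^ k * 2304 ^ k := by gcongr
      _ = 9216 ^ k := by rw [← mul_pow]; norm_num
      _ < (2 ^ 16) ^ k := by
        refine pow_lt_pow_left₀ (by norm_num) (by norm_num) (by omega)
  linarith

/-- Combination of both stages. -/
lemma combined_stage : ∃ κ : ℝ, 0 < κ ∧ κ ≤ 1 ∧ ∀ (l k : ℕ), 1 ≤ k → k < l → ∀ s : ℕ → ℝ, (∀ m, 0 ≤ s m) → PropJ l s →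
    s 0 = 1 → 0 < s l → ∃ c H : ℝ, 0 < c ∧ 1 ≤ H ∧ s l * c ^ l ≤ H * √(l.factorial) ∧
      (H * κ ^ k ≤ s k * (c / √k) ^ k ∨ H * κ ^ k ≤ s (k + 1) * (c / √k) ^ (k + 1)) := by
  refine ⟨(1/3)^193 * (1/9)^1538, by positivity,
    mul_le_one₀ (pow_le_one₀ (by norm_num) (by norm_num)) (by positivity) (pow_le_one₀ (by norm_num) (by norm_num)), ?_⟩
  intro l k hk hkl s hs hJ h0 hl
  have hsf : ∀ m : ℕ, 0 < √(m.factorial : ℝ) := fun m => Real.sqrt_pos.mpr (by positivity)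
  obtain ⟨c, hc, H, a, b, h1, h2, h3, h4, h5, h6, h7⟩ :=
    hull_exists (fun m => s m / √(m.factorial)) (fun m => div_nonneg (hs m) (hsf m).le) 0 k l (by omega) hkl
      (by simp [h0]) (div_pos hl (hsf l))
  have hH1 : 1 ≤ H := by simpa [h0] using h7 0 le_rfl (by omega)
  have hHl := h7 l (by omega) le_rfl
  refine ⟨c, H, hc, hH1, ?_, ?_⟩
  · rw [div_mul_eq_mul_div, div_le_iff₀ (hsf l)] at hHl
    exact hHl
  set u : ℕ → ℝ := fun m => s m * c ^ m with hu
  have huJ : PropJ l u := hJ.scale c hc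
  have hu0 : ∀ m, 0 ≤ u m := fun m => mul_nonneg (hs m) (by positivity)
  have usq : ∀ m, u m ^ 2 = (s m / √(m.factorial) * c ^ m) ^ 2 * m.factorial := by
    intro m
    have : √(m.factorial : ℝ) ^ 2 = m.factorial := Real.sq_sqrt (by positivity)
    have hne := (hsf m).ne'
    calc u m ^ 2 = (s m / √(m.factorial) * c ^ m) ^ 2 * √(m.factorial : ℝ) ^ 2 := by
          simp only [hu]; field_simp
      _ = _ := by rw [this]
  have hHpos : 0 < H := by linarith
  obtain ⟨b', g1, g2, g3, g4⟩ := far_stage l k hk u hu0 huJ H hHpos a b h2 h3 h4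
    (by rw [usq, h5]) (by rw [usq, h6]) (by
      intro m hm
      rw [usq]
      have := h7 m (by omega) hm
      have h0' : 0 ≤ s m / √(m.factorial) * c ^ m := mul_nonneg (div_nonneg (hs m) (hsf m).le) (by positivity)
      gcongr)
  have hkr : (0:ℝ) < k := by exact_mod_cast hk
  have hsk : 0 < √(k:ℝ) := Real.sqrt_pos.mpr hkr
  set v : ℕ → ℝ := fun m => u m * (1 / √k) ^ m with hv
  have hvJ : PropJ l v := huJ.scale _ (by positivity)
  have hv0 : ∀ m, 0 ≤ v m := fun m => mul_nonneg (hu0 m) (by positivity)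
  have vsq : ∀ m, v m ^ 2 = u m ^ 2 / k ^ m := by
    intro m
    simp only [hv]
    rw [mul_pow, ← pow_mul, mul_comm m 2, pow_mul, div_pow, Real.sq_sqrt hkr.le]
    simp [div_eq_mul_inv]
  have hfk : ∀ m : ℕ, ((1:ℝ)/3) ^ k ≤ m.factorial / k ^ m := by
    intro m
    have := pow_le_factorial_three 1 m k
    simp only [Nat.cast_one, one_mul] at this
    rw [div_pow, one_pow, div_le_div_iff₀ (by positivity) (by positivity)]
    linarith
  have hgen : ∀ m, H ^ 2 * ((1/3) ^ (384 * k)) * m.factorial ≤ u m ^ 2 → H * (1/3) ^ (193 * k) ≤ v m := by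
    intro m hm
    refine le_of_pow_le_pow_left₀ (n := 2) (by norm_num) (hv0 m) ?_
    rw [vsq]
    have e : ((1:ℝ)/3) ^ (386 * k) ≤ (1/3) ^ (385 * k) :=
      pow_le_pow_of_le_one (by norm_num) (by norm_num) (by omega)
    calc (H * (1/3) ^ (193 * k)) ^ 2 = H ^ 2 * (1/3) ^ (386 * k) := by
          rw [mul_pow, ← pow_mul]; congr 2; ring
      _ ≤ H ^ 2 * (1/3) ^ (385 * k) := by gcongr
      _ = H ^ 2 * ((1/3) ^ (384 * k)) * (1/3) ^ k := by
          rw [mul_assoc, ← pow_add]; congr 2; ring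
      _ ≤ H ^ 2 * ((1/3) ^ (384 * k)) * (m.factorial / k ^ m) := by gcongr; exact hfk m
      _ = H ^ 2 * ((1/3) ^ (384 * k)) * m.factorial / k ^ m := by ring
      _ ≤ _ := by gcongr
  have hone : ((1:ℝ)/3) ^ (384 * k) ≤ 1 := pow_le_one₀ (by norm_num) (by norm_num)
  have hva := hgen a (by
    rw [usq, h5]
    calc H ^ 2 * ((1/3) ^ (384 * k)) * a.factorial ≤ H ^ 2 * 1 * a.factorial := by gcongr
      _ = _ := by ring)
  have hvb := hgen b' g4
  have hfin := local_stage l k (1538 * k) v hv0 hvJ a b' (H * (1/3) ^ (193 * k)) h2 g1 g3 (by omega)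
    (by positivity) hva hvb
  have ek : H * ((1/3)^193 * (1/9)^1538) ^ k = H * (1/3) ^ (193 * k) * (1/9) ^ (1538 * k) := by
    rw [mul_pow, ← pow_mul, ← pow_mul]; ring
  rw [← ek] at hfin
  have hvm : ∀ m, v m = s m * (c / √k) ^ m := by
    intro m
    simp only [hv, hu]
    rw [mul_assoc, ← mul_pow]
    congr 2; ring
  rw [← hvm, ← hvm]
  exact le_max_iff.mp hfin

lemma div_pow_le_choose (p n : ℕ) (h : p ≤ n) : ((n : ℝ) / p) ^ p ≤ n.choose p := by
  induction p generalizing n with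
  | zero => simp
  | succ p ih =>
    obtain ⟨n, rfl⟩ : ∃ m, n = m + 1 := ⟨n - 1, by omega⟩
    have hp : p ≤ n := by omega
    have e : ((n + 1).choose (p + 1) : ℝ) = ((n + 1 : ℕ) : ℝ) / ((p + 1 : ℕ) : ℝ) * n.choose p := by
      have := Nat.add_one_mul_choose_eq n p
      have h2 : ((n + 1 : ℕ) : ℝ) * n.choose p = (n + 1).choose (p + 1) * ((p + 1 : ℕ) : ℝ) := by exact_mod_cast this
      rw [div_mul_eq_mul_div, h2]
      have : ((p + 1 : ℕ) : ℝ) ≠ 0 := by positivity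
      field_simp
    rw [e, pow_succ, mul_comm]
    gcongr
    refine le_trans ?_ (ih n hp)
    rcases Nat.eq_zero_or_pos p with h0 | h0
    · subst h0; simp
    have hp0 : (0:ℝ) < p := by exact_mod_cast h0
    have hpn : (p:ℝ) ≤ n := by exact_mod_cast hp
    gcongr ?_ ^ p
    rw [div_le_div_iff₀ (by positivity) hp0]
    push_cast
    nlinarith

lemma root_bound (κ : ℝ) (hκ : 0 < κ) (hκ1 : κ ≤ 1) (n : ℕ) (y : Fin n → ℝ) (k l p : ℕ) (hk : 1 ≤ k)
    (hkp : k ≤ p) (hpk : p ≤ 2 * k) (hpl : p ≤ l) (hln : l ≤ n) (c H : ℝ) (hc : 0 < c) (hH : 1 ≤ H)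
    (hl : |smean n l y| * c ^ l ≤ H * √(l.factorial))
    (hp : H * κ ^ k ≤ |smean n p y| * (c / √k) ^ p) :
    |esymmS n l y| ^ ((1 : ℝ) / l) ≤
      6 / κ * ((k : ℝ) / l) ^ ((1 : ℝ) / 2) * |esymmS n p y| ^ ((1 : ℝ) / p) := by
  have hp0 : p ≠ 0 := by omega
  have hl0 : l ≠ 0 := by omega
  have hkr : (0:ℝ) < k := by exact_mod_cast hk
  have hpr : (0:ℝ) < p := by exact_mod_cast (show 0 < p by omega)
  have hlr : (0:ℝ) < l := by exact_mod_cast (show 0 < l by omega)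
  have hnr : (0:ℝ) < n := by exact_mod_cast (show 0 < n by omega)
  have hsk : 0 < √(k:ℝ) := Real.sqrt_pos.mpr hkr
  have hsl : 0 < √(l:ℝ) := Real.sqrt_pos.mpr hlr
  have abs_eq : ∀ m ≤ n, |esymmS n m y| = n.choose m * |smean n m y| := by
    intro m hm
    have : (0:ℝ) < n.choose m := by exact_mod_cast Nat.choose_pos hm
    rw [smean, abs_div, abs_of_pos this]
    field_simp
  set x : ℝ := |esymmS n p y| ^ ((1 : ℝ) / p) with hx
  set X : ℝ := |esymmS n l y| ^ ((1 : ℝ) / l) with hX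
  have hx0 : 0 ≤ x := by positivity
  have hX0 : 0 ≤ X := by positivity
  have hxp : x ^ p = |esymmS n p y| := by
    rw [hx, one_div, Real.rpow_inv_natCast_pow (abs_nonneg _) hp0]
  have hXl : X ^ l = |esymmS n l y| := by
    rw [hX, one_div, Real.rpow_inv_natCast_pow (abs_nonneg _) hl0]
  have hsp : |smean n p y| ≤ (p * x / n) ^ p := by
    have h1 := div_pow_le_choose p n (by omega)
    have h2 : ((n : ℝ) / p) ^ p * |smean n p y| ≤ x ^ p := by
      rw [hxp, abs_eq p (by omega)]; gcongr
    have e : (p * x / n) ^ p = x ^ p / ((n : ℝ) / p) ^ p := by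
      rw [← div_pow]; congr 1; field_simp
    rw [e, le_div_iff₀ (by positivity)]
    linarith
  set D : ℝ := p * x * c / (n * κ * √k) with hD
  have hD0 : 0 ≤ D := by positivity
  have hHD : H ≤ D ^ p := by
    have hκp : κ ^ p ≤ κ ^ k := pow_le_pow_of_le_one hκ.le hκ1 hkp
    have h1 : H * κ ^ p ≤ (p * x / n) ^ p * (c / √k) ^ p := by
      calc H * κ ^ p ≤ H * κ ^ k := by gcongr
        _ ≤ _ := hp
        _ ≤ _ := by gcongr
    have e : D ^ p = (p * x / n) ^ p * (c / √k) ^ p / κ ^ p := by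
      rw [← mul_pow, ← div_pow]; congr 1; rw [hD]; field_simp
    rw [e, le_div_iff₀ (by positivity)]
    exact h1
  have hD1 : 1 ≤ D := by
    by_contra hlt
    push Not at hlt
    have := pow_lt_one₀ hD0 hlt hp0
    linarith
  have hHDl : H ≤ D ^ l := hHD.trans (pow_le_pow_right₀ hD1 hpl)
  have hfac : √(l.factorial : ℝ) ≤ √(l:ℝ) ^ l := by
    rw [Real.sqrt_le_iff]
    refine ⟨by positivity, ?_⟩
    rw [← pow_mul, mul_comm l 2, pow_mul, Real.sq_sqrt hlr.le]
    exact_mod_cast Nat.factorial_le_pow l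
  have hch : (n.choose l : ℝ) ≤ (3 * n / l) ^ l := by
    have h1 : (n.choose l : ℝ) ≤ (n:ℝ) ^ l / l.factorial := Nat.choose_le_pow_div l n
    have h2 : (l:ℝ) ^ l ≤ l.factorial * 3 ^ l := by simpa using pow_le_factorial_three 1 l l
    refine h1.trans ?_
    rw [div_pow, mul_pow, div_le_div_iff₀ (by positivity) (by positivity)]
    calc (n:ℝ) ^ l * l ^ l ≤ n ^ l * (l.factorial * 3 ^ l) := by gcongr
      _ = _ := by ring
  have hfin : X * c ≤ 3 * n / l * D * √l := by
    refine le_of_pow_le_pow_left₀ hl0 (by positivity) ?_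
    calc (X * c) ^ l = n.choose l * (|smean n l y| * c ^ l) := by
          rw [mul_pow, hXl, abs_eq l hln]; ring
      _ ≤ (3 * n / l) ^ l * (D ^ l * √(l:ℝ) ^ l) := by
          have h9 : |smean n l y| * c ^ l ≤ D ^ l * √(l:ℝ) ^ l :=
            hl.trans (mul_le_mul hHDl hfac (Real.sqrt_nonneg _) (by positivity))
          exact mul_le_mul hch h9 (by positivity) (by positivity)
      _ = _ := by rw [mul_pow, mul_pow, mul_assoc]
  have hpk' : (p:ℝ) ≤ 2 * k := by exact_mod_cast hpk
  have hsq : ((k : ℝ) / l) ^ ((1 : ℝ) / 2) = √k / √l := by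
    rw [← Real.sqrt_eq_rpow, Real.sqrt_div hkr.le]
  rw [hsq]
  refine le_of_mul_le_mul_right (hfin.trans ?_) hc
  have el : (l:ℝ) = √l * √l := (Real.mul_self_sqrt hlr.le).symm
  have ek : (k:ℝ) = √k * √k := (Real.mul_self_sqrt hkr.le).symm
  calc 3 * n / l * D * √l = p * (3 * x * c * √l / (l * (κ * √k))) := by rw [hD]; field_simp
    _ ≤ (2 * k) * (3 * x * c * √l / (l * (κ * √k))) := by gcongr
    _ = (2 * (√k * √k)) * (3 * x * c * √l / ((√l * √l) * (κ * √k))) := by rw [← el, ← ek]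
    _ = _ := by field_simp; ring

theorem maclaurin_type_inequality_unnormalized :
    ∃ C : ℝ, 0 < C ∧ ∀ (n : ℕ), 1 ≤ n → ∀ (y : Fin n → ℝ) (k ℓ : ℕ),
      1 ≤ k → k < ℓ → ℓ ≤ n →
      |esymmS n ℓ y| ^ ((1 : ℝ) / ℓ) ≤
        C * ((k : ℝ) / ℓ) ^ ((1 : ℝ) / 2) *
          max (|esymmS n k y| ^ ((1 : ℝ) / k)) (|esymmS n (k + 1) y| ^ ((1 : ℝ) / (k + 1))) := by
  obtain ⟨κ, hκ, hκ1, hmain⟩ := combined_stage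
  refine ⟨6 / κ, by positivity, ?_⟩
  intro n _ y k l hk hkl hln
  by_cases hS : esymmS n l y = 0
  · have : (1:ℝ) / l ≠ 0 := by
      have : (0:ℝ) < l := by exact_mod_cast (show 0 < l by omega)
      positivity
    rw [hS, abs_zero, Real.zero_rpow this]
    positivity
  have hJ : PropJ l (fun m => |smean n m y|) := fun a b hab hb => propJ_smean n y a b hab (hb.trans hln)
  have hsl : 0 < |smean n l y| := by
    rw [abs_pos, smean]
    exact div_ne_zero hS (by exact_mod_cast (Nat.choose_pos hln).ne')
  obtain ⟨c, H, hc, hH, hl, hor⟩ := hmain l k hk hkl _ (fun m => abs_nonneg _) hJ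
    (by simp [smean, esymmS]) hsl
  rcases hor with h | h
  · refine (root_bound κ hκ hκ1 n y k l k hk le_rfl (by omega) hkl.le hln c H hc hH hl h).trans ?_
    gcongr
    exact le_max_left _ _
  · refine (root_bound κ hκ hκ1 n y k l (k + 1) hk (by omega) (by omega) hkl hln c H hc hH hl h).trans ?_
    push_cast
    gcongr
    exact le_max_right _ _
end

section
/- There exists an absolute constant C > 0 such that the following holds: for every n ≥ 1, all real numbers y_1, …, y_n, every integer 1 ≤ k < n, and every real θ > 0, if |S_k(y)|^2 ≤ θ^k / k! and |S_{k+1}(y)|^2 ≤ θ^(k+1) / (k+1)!, then |S_ℓ(y)|^2 ≤ (C·θ)^ℓ / ℓ! for all integers k ≤ ℓ ≤ n. -/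
open Finset Real

open Polynomial in
lemma splits_deriv {f : ℝ[X]} (hf : f.Splits) : (derivative f).Splits := by
  rw [splits_iff_card_roots] at *
  have h1 := card_roots_le_derivative f
  have h2 := card_roots' (derivative f)
  have h3 := natDegree_derivative_le f
  rcases Nat.eq_zero_or_pos f.natDegree with h | h
  · have : derivative f = 0 := by
      rw [eq_C_of_natDegree_eq_zero h]; simp
    simp [this]
  · omega

open Polynomial in
lemma splits_rev {f : ℝ[X]} (hf : f.Splits) : f.reverse.Splits := by
  obtain ⟨m, hm⟩ := splits_iff_exists_multiset.1 hf
  rw [hm, reverse_mul_of_domain]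
  refine Splits.mul (by simp) ?_
  clear hm
  induction m using Multiset.induction_on with
  | empty =>
    rw [Multiset.map_zero, Multiset.prod_zero, ← C_1, reverse_C]
    exact Splits.C _
  | cons a m ih =>
    rw [Multiset.map_cons, Multiset.prod_cons, reverse_mul_of_domain]
    refine Splits.mul (Splits.of_natDegree_le_one ((reverse_natDegree_le _).trans ?_)) ih
    simp

open Polynomial in
lemma splits_refl {f : ℝ[X]} (hf : f.Splits) (N : ℕ) (hN : f.natDegree ≤ N) :
    (reflect N f).Splits := by
  have h : reflect N f = f.reverse * X ^ (N - f.natDegree) := by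
    have := reflect_mul f (1 : ℝ[X]) le_rfl (show (1 : ℝ[X]).natDegree ≤ N - f.natDegree by simp)
    rw [mul_one, Nat.add_sub_cancel' hN] at this
    rw [this, reverse]
    congr 1
    simp
  rw [h]
  exact (splits_rev hf).mul (Splits.X_pow _)

open Polynomial in
/-- the window polynomial -/
noncomputable def winPoly (s : ℕ → ℝ) (p N : ℕ) : ℝ[X] :=
  ∑ m ∈ range (N + 1), C ((N.choose m : ℝ) * s (p + m)) * X ^ m

open Polynomial in
lemma winPoly_coeff (s : ℕ → ℝ) (p N m : ℕ) :
    (winPoly s p N).coeff m = (N.choose m : ℝ) * s (p + m) := by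
  simp only [winPoly, finsetSum_coeff, coeff_C_mul, coeff_X_pow]
  simp only [mul_ite, mul_one, mul_zero, Finset.sum_ite_eq, Finset.mem_range]
  split_ifs with h
  · rfl
  · rw [Nat.choose_eq_zero_of_lt (by omega)]; simp

open Polynomial in
lemma winPoly_natDegree (s : ℕ → ℝ) (p N : ℕ) : (winPoly s p N).natDegree ≤ N := by
  rw [natDegree_le_iff_coeff_eq_zero]
  intro m hm
  rw [winPoly_coeff, Nat.choose_eq_zero_of_lt hm]; simp

open Polynomial in
lemma winPoly_deriv (s : ℕ → ℝ) (p N : ℕ) :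
    derivative (winPoly s p (N + 1)) = C ((N + 1 : ℕ) : ℝ) * winPoly s (p + 1) N := by
  ext m
  rw [coeff_derivative, coeff_C_mul, winPoly_coeff, winPoly_coeff]
  have := Nat.add_one_mul_choose_eq N m
  have h : ((N + 1 : ℕ) : ℝ) * (N.choose m : ℝ) = ((N + 1).choose (m + 1) : ℝ) * ((m : ℝ) + 1) := by
    exact_mod_cast this
  rw [show p + 1 + m = p + (m + 1) by ring, ← mul_assoc, h]; ring

open Polynomial in
lemma winPoly_trunc (s : ℕ → ℝ) (p N : ℕ) :
    reflect N (derivative (reflect (N + 1) (winPoly s p (N + 1))))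
      = C ((N + 1 : ℕ) : ℝ) * winPoly s p N := by
  ext m
  rw [coeff_reflect, coeff_derivative, coeff_reflect, coeff_C_mul, winPoly_coeff, winPoly_coeff]
  rcases le_or_gt m N with h | h
  · rw [revAt_le h, revAt_le (by omega), show N + 1 - (N - m + 1) = m by omega]
    have := Nat.choose_mul_succ_eq N m
    have h2 : ((N.choose m : ℕ) : ℝ) * ((N + 1 : ℕ) : ℝ) =
        ((N + 1).choose m : ℝ) * (((N - m : ℕ) : ℝ) + 1) := by
      rw [show N + 1 - m = N - m + 1 by omega] at this
      exact_mod_cast this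
    linear_combination (-s (p + m)) * h2
  · rw [revAt_eq_self_of_lt h, revAt_eq_self_of_lt (by omega),
      Nat.choose_eq_zero_of_lt h, Nat.choose_eq_zero_of_lt (by omega)]
    simp

open Polynomial in
lemma splits_of_C_mul {f : ℝ[X]} {a : ℝ} (ha : a ≠ 0) (h : (C a * f).Splits) : f.Splits := by
  have := h.C_mul a⁻¹
  rwa [← mul_assoc, ← C_mul, inv_mul_cancel₀ ha, C_1, one_mul] at this

open Polynomial in
lemma winPoly_splits (s : ℕ → ℝ) (n : ℕ) (h0 : (winPoly s 0 n).Splits) (p N : ℕ) (h : p + N ≤ n) :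
    (winPoly s p N).Splits := by
  have hp : ∀ p, p ≤ n → (winPoly s p (n - p)).Splits := by
    intro p
    induction p with
    | zero => intro _; simpa using h0
    | succ p ih =>
      intro hp
      have h1 := ih (by omega)
      have h2 := splits_deriv h1
      rw [show n - p = (n - (p + 1)) + 1 by omega, winPoly_deriv] at h2
      exact splits_of_C_mul (by positivity) h2
  have hd : ∀ d N, N + d = n - p → (winPoly s p N).Splits := by
    intro d
    induction d with
    | zero => intro N hN; rw [show N = n - p by omega]; exact hp p (by omega)
    | succ d ih =>
      intro N hN
      have h1 := ih (N + 1) (by omega)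
      have h2 := splits_deriv (splits_refl h1 (N + 1) (winPoly_natDegree _ _ _))
      have h3 := splits_refl h2 N ((natDegree_derivative_le _).trans ?_)
      · rw [winPoly_trunc] at h3
        exact splits_of_C_mul (by positivity) h3
      · have := natDegree_reflect_le (p := winPoly s p (N + 1)) (N := N + 1)
        have := winPoly_natDegree s p (N + 1)
        have : max (N+1) (winPoly s p (N + 1)).natDegree = N + 1 := by omega
        omega
  exact hd (n - p - N) N (by omega)

open Polynomial in
lemma winPoly_smean_splits (n : ℕ) (y : Fin n → ℝ) :
    (winPoly (fun m => smean n m y) 0 n).Splits := by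
  have h : winPoly (fun m => smean n m y) 0 n = ∏ i : Fin n, (1 + C (y i) * X) := by
    rw [Finset.prod_one_add, winPoly, Finset.sum_powerset]
    simp only [card_univ, Fintype.card_fin]
    refine Finset.sum_congr rfl fun m hm => ?_
    have hc : (n.choose m : ℝ) ≠ 0 := by
      have := Nat.choose_pos (show m ≤ n by simpa [Nat.lt_succ_iff] using hm)
      positivity
    rw [smean, zero_add, mul_div_cancel₀ _ hc, esymmS, map_sum, Finset.sum_mul]
    refine Finset.sum_congr rfl fun A hA => ?_
    rw [Finset.prod_mul_distrib, map_prod, Finset.prod_const, (Finset.mem_powersetCard.1 hA).2]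
  rw [h]
  refine Splits.prod fun i _ => Splits.of_natDegree_le_one ?_
  compute_degree

lemma prod_one_add_ge (m : Multiset ℝ) (hm : ∀ x ∈ m, 0 < x) (g : ℝ) (hg : 0 < g)
    (h : g ^ (Multiset.card m) ≤ m.prod) :
    (1 + g) ^ (Multiset.card m) ≤ (m.map (fun x => 1 + x)).prod := by
  have key : ∀ x : ℝ, 0 < x → (1 + g) * (x / g) ^ (g / (1 + g)) ≤ 1 + x := by
    intro x hx
    have := Real.geom_mean_le_arith_mean2_weighted (w₁ := 1 / (1 + g)) (w₂ := g / (1 + g))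
      (p₁ := 1) (p₂ := x / g) (by positivity) (by positivity) (by positivity) (by positivity)
      (by field_simp)
    rw [Real.one_rpow, one_mul] at this
    calc (1 + g) * (x / g) ^ (g / (1 + g)) ≤ (1 + g) * (1 / (1 + g) * 1 + g / (1 + g) * (x / g)) := by
          gcongr
      _ = 1 + x := by field_simp
  have main : ∀ m : Multiset ℝ, (∀ x ∈ m, 0 < x) →
      0 < m.prod ∧ (1 + g) ^ (Multiset.card m) * (m.prod / g ^ (Multiset.card m)) ^ (g / (1 + g))
        ≤ (m.map (fun x => 1 + x)).prod := by
    intro m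
    induction m using Multiset.induction_on with
    | empty => intro _; simp
    | cons a m ih =>
      intro hm
      have ha : 0 < a := hm a (by simp)
      obtain ⟨h1, h2⟩ := ih fun x hx => hm x (by simp [hx])
      refine ⟨by rw [Multiset.prod_cons]; positivity, ?_⟩
      rw [Multiset.map_cons, Multiset.prod_cons, Multiset.prod_cons, Multiset.card_cons]
      rw [show a * m.prod / g ^ (Multiset.card m + 1) = (a / g) * (m.prod / g ^ Multiset.card m) by
        rw [pow_succ]; field_simp]
      rw [Real.mul_rpow (by positivity) (by positivity), pow_succ]
      calc _ = ((1 + g) * (a / g) ^ (g / (1 + g))) * ((1 + g) ^ (Multiset.card m) * (m.prod / g ^ (Multiset.card m)) ^ (g / (1 + g))) := by ring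
        _ ≤ _ := by
          apply mul_le_mul (key a ha) h2 (by positivity) (by positivity)
  refine le_trans ?_ (main m hm).2
  apply le_mul_of_one_le_right (by positivity)
  apply Real.one_le_rpow _ (by positivity)
  rw [one_le_div (by positivity)]
  exact h

open Polynomial in
lemma window (s : ℕ → ℝ) (p N : ℕ) (hs : (winPoly s p N).Splits) (hp : s p ≠ 0)
    (R g : ℝ) (hR : 0 < R) (hg : 0 < g) (h : g ^ N * s p ^ 2 ≤ R ^ (2 * N) * s (p + N) ^ 2) :
    s p ^ 2 * (1 + g) ^ N ≤ (∑ m ∈ range (N + 1), (N.choose m : ℝ) * |s (p + m)| * R ^ m) ^ 2 := by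
  have hq : s (p + N) ≠ 0 := by
    intro h0
    rw [h0] at h
    have : 0 < g ^ N * s p ^ 2 := by positivity
    simp at h; linarith
  set Q := winPoly s p N with hQ
  have hdeg : Q.natDegree = N := by
    refine le_antisymm (winPoly_natDegree _ _ _) (le_natDegree_of_ne_zero ?_)
    rw [winPoly_coeff]; simpa using hq
  have hlead : Q.leadingCoeff = s (p + N) := by
    rw [leadingCoeff, hdeg, winPoly_coeff]; simp
  have hcard : Multiset.card Q.roots = N := by rw [← hs.natDegree_eq_card_roots, hdeg]
  have h0 : s p = s (p + N) * (Q.roots.map (fun r => 0 - r)).prod := by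
    have := hs.eval_eq_prod_roots 0
    rw [hlead] at this
    rw [← this, ← coeff_zero_eq_eval_zero, winPoly_coeff]; simp
  have hI : Q.eval₂ Complex.ofRealHom (Complex.I * R) = (s (p + N) : ℂ) *
      (Q.roots.map (fun r : ℝ => Complex.I * R - (r : ℂ))).prod := by
    conv_lhs => rw [hs.eq_prod_roots, hlead]
    rw [eval₂_mul, eval₂_C, ← coe_eval₂RingHom, map_multiset_prod, Multiset.map_map]
    simp
  have hle : ‖Q.eval₂ Complex.ofRealHom (Complex.I * R)‖ ≤
      ∑ m ∈ range (N + 1), (N.choose m : ℝ) * |s (p + m)| * R ^ m := by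
    rw [hQ, winPoly, eval₂_finsetSum]
    refine (norm_sum_le _ _).trans (Finset.sum_le_sum fun m _ => ?_)
    rw [eval₂_mul, eval₂_C, eval₂_X_pow]
    simp [abs_of_pos hR]
  have hsq : ‖Q.eval₂ Complex.ofRealHom (Complex.I * R)‖ ^ 2 = s (p + N) ^ 2 *
      (Q.roots.map (fun r : ℝ => R ^ 2 + r ^ 2)).prod := by
    rw [hI, norm_mul, mul_pow, Complex.norm_real, Real.norm_eq_abs, sq_abs]
    congr 1
    generalize Q.roots = m
    induction m using Multiset.induction_on with
    | empty => simp
    | cons a m ih =>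
      rw [Multiset.map_cons, Multiset.map_cons, Multiset.prod_cons, Multiset.prod_cons, norm_mul,
        mul_pow, ih]
      congr 1
      rw [← Complex.normSq_eq_norm_sq, Complex.normSq_apply]
      simp; ring
  have hne : ∀ r ∈ Q.roots, r ≠ 0 := by
    intro r hr h00
    subst h00
    have := (mem_roots'.1 hr).2
    rw [IsRoot, ← coeff_zero_eq_eval_zero, winPoly_coeff] at this
    simp at this; exact hp this
  have h0sq : s p ^ 2 = s (p + N) ^ 2 * (Q.roots.map (fun r => r ^ 2)).prod := by
    rw [h0, mul_pow, ← Multiset.prod_map_pow]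
    simp
  have hprod : ∀ m : Multiset ℝ, (∀ r ∈ m, r ≠ 0) →
      (m.map (fun r => r ^ 2)).prod * (m.map (fun r => R ^ 2 / r ^ 2)).prod =
        R ^ (2 * Multiset.card m) ∧ 
      (m.map (fun r => r ^ 2)).prod * ((m.map (fun r => R ^ 2 / r ^ 2)).map (fun x => 1 + x)).prod =
        (m.map (fun r => R ^ 2 + r ^ 2)).prod := by
    intro m
    induction m using Multiset.induction_on with
    | empty => intro _; simp
    | cons a m ih =>
      intro hm
      have ha : a ≠ 0 := hm a (by simp)
      obtain ⟨h1, h2⟩ := ih fun x hx => hm x (by simp [hx])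
      simp only [Multiset.map_cons, Multiset.prod_cons, Multiset.card_cons]
      constructor
      · rw [mul_add, pow_add, ← h1, mul_one, mul_mul_mul_comm, mul_div_cancel₀ _ (pow_ne_zero 2 ha)]; ring
      · rw [← h2]; field_simp; ring
  obtain ⟨e1, e2⟩ := hprod Q.roots hne
  have hA : 0 < (Q.roots.map (fun r => r ^ 2)).prod := by
    by_contra hcon
    have h1 : 0 < s p ^ 2 := by positivity
    rw [h0sq] at h1
    have : 0 < s (p + N) ^ 2 := by positivity
    exact hcon (pos_of_mul_pos_right h1 this.le)
  have hfin := prod_one_add_ge (Q.roots.map (fun r => R ^ 2 / r ^ 2)) (by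
    intro x hx
    obtain ⟨r, hr, rfl⟩ := Multiset.mem_map.1 hx
    have := hne r hr
    positivity) g hg (by
    rw [Multiset.card_map, hcard]
    rw [hcard] at e1
    rw [← e1, h0sq] at h
    have h2 : 0 < s (p + N) ^ 2 * (Q.roots.map (fun r => r ^ 2)).prod := by positivity
    refine le_of_mul_le_mul_right ?_ h2
    linarith)
  rw [Multiset.card_map, hcard] at hfin
  calc s p ^ 2 * (1 + g) ^ N ≤ s p ^ 2 * ((Q.roots.map (fun r => R ^ 2 / r ^ 2)).map (fun x => 1 + x)).prod :=
        mul_le_mul_of_nonneg_left hfin (by positivity)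
    _ = ‖Q.eval₂ Complex.ofRealHom (Complex.I * R)‖ ^ 2 := by
      rw [hsq, h0sq, ← e2, mul_assoc]
    _ ≤ _ := by gcongr

set_option maxHeartbeats 4000000 in
lemma contra_core (k i p N : ℕ) (hi : 1 ≤ i) (hik : i ≤ k) (hp : p + i = k) (hN : i + 2 ≤ N)
    (t : ℕ → ℝ)
    (h1 : ∀ m ≤ i + 1, t m ≤ √((p + m : ℕ) : ℝ) ^ m * Real.exp (-15 * √((k : ℝ) / i)) ^ m)
    (h2 : ∀ m, i + 2 ≤ m → m ≤ N → t m ≤ √((p + m : ℕ) : ℝ) ^ m)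
    (W : ∀ r g : ℝ, 0 < r → 0 < g → g ^ N ≤ r ^ (2 * N) * (N.factorial : ℝ) →
      (1 + g) ^ N ≤ (∑ m ∈ range (N + 1), (N.choose m : ℝ) * t m * r ^ m) ^ 2)
    (ht : ∀ m, 0 ≤ t m) : False := by
  set z := √((k : ℝ) / i) with hz
  set ε := Real.exp (-15 * z) with hε
  set e := Real.exp 1 with he
  have hi' : (1 : ℝ) ≤ i := by exact_mod_cast hi
  have hik' : (i : ℝ) ≤ k := by exact_mod_cast hik
  have hk' : (1 : ℝ) ≤ k := hi'.trans hik'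
  have hk0 : (0 : ℝ) < k := by linarith
  have hi0 : (0 : ℝ) < i := by linarith
  have hN' : (i : ℝ) + 2 ≤ N := by exact_mod_cast hN
  have hN0 : (0 : ℝ) < N := by linarith
  have he0 : 0 < e := Real.exp_pos 1
  have he1 : e < 2.7182818286 := Real.exp_one_lt_d9
  have he2 : 2.7182818283 < e := Real.exp_one_gt_d9
  have hz1 : 1 ≤ z := by
    rw [hz, Real.one_le_sqrt, one_le_div hi0]; exact hik'
  have hzsq : z ^ 2 = k / i := Real.sq_sqrt (by positivity)
  have hε0 : 0 < ε := Real.exp_pos _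
  set X := (1 / 1000 : ℝ) * i * Real.exp (-2 * z) with hX
  have hX0 : 0 < X := by positivity
  have hE1 : Real.exp (-2 * z) ≤ 1 := by
    rw [Real.exp_le_one_iff]; linarith
  clear_value z ε e X
  have hXi : X ≤ (1 / 1000 : ℝ) * i := by
    rw [hX]; exact mul_le_of_le_one_right (by positivity) hE1
  set w := √(2 * (k : ℝ)) with hw
  have hw0 : 0 < w := by positivity
  have hwsq : w ^ 2 = 2 * k := Real.sq_sqrt (by positivity)
  set r := X / (N * w) with hr
  have hr0 : 0 < r := by positivity
  set g := X ^ 2 / (2 * e * k * N) with hg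
  have hg0 : 0 < g := by positivity
  clear_value w r g
  have hgr : g = r ^ 2 * (N / e) := by
    rw [hg, hr, div_pow, mul_pow (N : ℝ) w, hwsq]; field_simp
  have hg1 : g ≤ 1 := by
    rw [hg, div_le_one (by positivity)]
    have a1 : X ^ 2 ≤ i * i := by nlinarith
    have a2 : (i : ℝ) * i ≤ k * N := by nlinarith
    nlinarith [mul_pos hk0 hN0]
  have hfac : ((N : ℝ) / e) ^ N ≤ (N.factorial : ℝ) := by
    have := Real.pow_div_factorial_le_exp (N : ℝ) hN0.le N
    rw [div_le_iff₀ (by positivity)] at this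
    rw [div_pow, div_le_iff₀ (by positivity), he, ← Real.exp_nat_mul, mul_one]
    linarith
  have hW := W r g hr0 hg0 (by
    rw [hgr, mul_pow, ← pow_mul]
    gcongr)
  set Y := X ^ 2 / (8 * e * k) with hY
  have hY0 : 0 < Y := by positivity
  clear_value Y
  have hYg : 2 * Y = N * (g / 2) := by
    rw [hY, hg]; field_simp; ring
  have hexp : Real.exp (g / 2) ≤ 1 + g := by
    have a1 := Real.add_one_le_exp (-(g / 2))
    have a2 : Real.exp (g / 2) * Real.exp (-(g / 2)) = 1 := by
      rw [← Real.exp_add]; simp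
    have a3 := Real.exp_pos (g / 2)
    have a4 : Real.exp (g / 2) * (1 - g / 2) ≤ 1 := by nlinarith
    have a5 : 1 ≤ (1 + g) * (1 - g / 2) := by nlinarith
    have a6 : 0 < 1 - g / 2 := by linarith
    exact le_of_mul_le_mul_right (a4.trans a5) a6
  set T := ∑ m ∈ range (N + 1), (N.choose m : ℝ) * t m * r ^ m with hS
  clear_value T
  have hS0 : 0 ≤ T := hS ▸ Finset.sum_nonneg fun m _ => by have := ht m; positivity
  have hYS : Real.exp Y ≤ T := by
    refine le_of_sq_le_sq ?_ hS0
    refine le_trans ?_ hW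
    calc Real.exp Y ^ 2 = Real.exp (g / 2) ^ N := by
          rw [← Real.exp_nat_mul, ← Real.exp_nat_mul, ← hYg]; norm_num
      _ ≤ _ := by gcongr
  -- common term bound
  have hterm : ∀ m, (N.choose m : ℝ) * (√((p + m : ℕ) : ℝ) ^ m) * r ^ m ≤
      (N * r * √((p + m : ℕ) : ℝ)) ^ m / (m.factorial : ℝ) := by
    intro m
    have a1 : (N.choose m : ℝ) ≤ (N : ℝ) ^ m / (m.factorial : ℝ) := Nat.choose_le_pow_div m N
    calc _ ≤ (N : ℝ) ^ m / (m.factorial : ℝ) * (√((p + m : ℕ) : ℝ) ^ m) * r ^ m := by gcongr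
      _ = _ := by rw [mul_pow, mul_pow]; ring
  have hNr : N * r = X / w := by rw [hr]; field_simp
  have hhead : ∑ m ∈ range (i + 2), (N.choose m : ℝ) * t m * r ^ m ≤ Real.exp (X * ε) := by
    refine le_trans (Finset.sum_le_sum fun m hm => ?_)
      (Real.sum_le_exp_of_nonneg (x := X * ε) (by positivity) (i + 2))
    have hm' : m ≤ i + 1 := by have := Finset.mem_range.1 hm; omega
    have a1 := h1 m hm'
    have a2 : √((p + m : ℕ) : ℝ) ≤ w := by
      rw [hw]
      apply Real.sqrt_le_sqrt
      have : p + m ≤ 2 * k := by omega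
      exact_mod_cast this
    calc (N.choose m : ℝ) * t m * r ^ m ≤
          (N.choose m : ℝ) * (√((p + m : ℕ) : ℝ) ^ m * ε ^ m) * r ^ m := by gcongr
      _ = ((N.choose m : ℝ) * (√((p + m : ℕ) : ℝ) ^ m) * r ^ m) * ε ^ m := by ring
      _ ≤ ((N * r * √((p + m : ℕ) : ℝ)) ^ m / (m.factorial : ℝ)) * ε ^ m := by
          gcongr; exact hterm m
      _ ≤ ((N * r * w) ^ m / (m.factorial : ℝ)) * ε ^ m := by gcongr
      _ = (X * ε) ^ m / (m.factorial : ℝ) := by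
          rw [hNr, div_mul_cancel₀ _ hw0.ne', mul_pow]; ring
  set ρ := e * X / i with hρ
  have hρ0 : 0 < ρ := by positivity
  clear_value ρ
  have hρe : ρ = e * (1 / 1000) * Real.exp (-2 * z) := by
    rw [hρ, hX]; field_simp
  have hρ1 : ρ ≤ 1 / 2 := by
    rw [hρe]
    have : e * (1 / 1000) ≤ 1 / 2 := by linarith
    calc _ ≤ e * (1 / 1000) * 1 := by gcongr
      _ ≤ _ := by linarith
  have htail : ∑ m ∈ Finset.Ico (i + 2) (N + 1), (N.choose m : ℝ) * t m * r ^ m ≤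
      2 * ρ ^ (i + 2) := by
    have b1 : ∑ m ∈ Finset.Ico (i + 2) (N + 1), (N.choose m : ℝ) * t m * r ^ m ≤
        ∑ m ∈ Finset.Ico (i + 2) (N + 1), ρ ^ m := by
      refine Finset.sum_le_sum fun m hm => ?_
      obtain ⟨hm1, hm2⟩ := Finset.mem_Ico.1 hm
      have hmi : (i : ℝ) ≤ m := by exact_mod_cast (by omega : i ≤ m)
      have hm0 : (0 : ℝ) < m := by linarith
      have a1 := h2 m hm1 (by omega)
      have a3 : √((p + m : ℕ) : ℝ) * i ≤ w * m := by
        refine le_of_sq_le_sq ?_ (by positivity)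
        rw [mul_pow, mul_pow, hwsq, Real.sq_sqrt (by positivity)]
        have : ((p + m : ℕ) : ℝ) ≤ k + m := by exact_mod_cast (by omega : p + m ≤ k + m)
        have c1 : (i : ℝ) ^ 2 ≤ m ^ 2 := by gcongr
        have c2 : (m : ℝ) * i ^ 2 ≤ m * (k * m) := by
          rw [sq]; gcongr
        calc ((p + m : ℕ) : ℝ) * (i : ℝ) ^ 2 ≤ (k + m) * (i : ℝ) ^ 2 := by gcongr
          _ ≤ 2 * (k : ℝ) * (m : ℝ) ^ 2 := by nlinarith
      have hf : (m : ℝ) ^ m ≤ e ^ m * (m.factorial : ℝ) := by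
        have := Real.pow_div_factorial_le_exp (m : ℝ) hm0.le m
        rw [div_le_iff₀ (by positivity)] at this
        rw [he, ← Real.exp_nat_mul, mul_one]
        exact this
      calc (N.choose m : ℝ) * t m * r ^ m ≤
            (N.choose m : ℝ) * (√((p + m : ℕ) : ℝ) ^ m) * r ^ m := by gcongr
        _ ≤ (N * r * √((p + m : ℕ) : ℝ)) ^ m / (m.factorial : ℝ) := hterm m
        _ ≤ (ρ * (m / e)) ^ m / (m.factorial : ℝ) := by
            refine div_le_div_of_nonneg_right (pow_le_pow_left₀ (by positivity) ?_ _) (by positivity)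
            rw [hNr, hρ, div_mul_eq_mul_div, div_le_iff₀ hw0]
            calc X * √((p + m : ℕ) : ℝ) = X / i * (√((p + m : ℕ) : ℝ) * i) := by field_simp
              _ ≤ X / i * (w * m) := by gcongr
              _ = _ := by field_simp
        _ = ρ ^ m * (m ^ m / (e ^ m * (m.factorial : ℝ))) := by
            rw [mul_pow, div_pow]; field_simp
        _ ≤ ρ ^ m * 1 := by
            gcongr
            rw [div_le_one (by positivity)]; exact hf
        _ = ρ ^ m := mul_one _
    refine b1.trans ((geom_sum_Ico_le_of_lt_one hρ0.le (by linarith)).trans ?_)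
    rw [div_le_iff₀ (by linarith)]
    have : 0 < ρ ^ (i + 2) := by positivity
    nlinarith
  have htail2 : 2 * ρ ^ (i + 2) < Y / 2 := by
    have hv : (k : ℝ) ≤ (z * i) ^ 2 := by
      rw [mul_pow, hzsq, div_mul_eq_mul_div, le_div_iff₀ hi0]
      nlinarith [mul_le_mul_of_nonneg_left hi' (by positivity : 0 ≤ (k : ℝ) * i)]
    have hq := Real.quadratic_le_exp_of_nonneg (x := 2 * (z * i)) (by positivity)
    have hq2 : 2 * (k : ℝ) ≤ Real.exp (2 * (z * i)) := by
      have : 0 < z * i := by positivity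
      nlinarith
    have c1 : ρ ^ i ≤ e * (1 / 1000) * (1 / (2 * k)) := by
      rw [hρe, mul_pow]
      have d1 : (e * (1 / 1000)) ^ i ≤ e * (1 / 1000) := by
        apply pow_le_of_le_one (by positivity) (by linarith) (by omega)
      have d2 : Real.exp (-2 * z) ^ i ≤ 1 / (2 * k) := by
        rw [← Real.exp_nat_mul, show (i : ℝ) * (-2 * z) = -(2 * (z * i)) by ring, Real.exp_neg,
          ← one_div]
        gcongr
      gcongr
    have c2 : ρ ^ 2 ≤ e ^ 2 * X ^ 2 := by
      rw [hρ, div_pow, mul_pow]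
      apply div_le_self (by positivity)
      nlinarith
    calc 2 * ρ ^ (i + 2) = 2 * ρ ^ i * ρ ^ 2 := by ring
      _ ≤ 2 * (e * (1 / 1000) * (1 / (2 * k))) * (e ^ 2 * X ^ 2) := by gcongr
      _ = (e ^ 4 * 16 / 1000) * (X ^ 2 / (16 * e * k)) := by field_simp
      _ < 1 * (X ^ 2 / (16 * e * k)) := by
          gcongr
          have : e ^ 4 < (2.7182818286 : ℝ) ^ 4 := by gcongr
          have h3 : (2.7182818286 : ℝ) ^ 4 < 60 := by norm_num
          linarith
      _ = Y / 2 := by rw [hY]; field_simp; ring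
  have hXε : X * ε ≤ Y / 2 := by
    have hq := Real.quadratic_le_exp_of_nonneg (x := 2 * z) (by positivity)
    have d1 : 2 * z ^ 2 ≤ Real.exp (2 * z) := by nlinarith
    have d2 : 8000 * e ≤ Real.exp (11 * z) := by
      have e1 : Real.exp 11 ≤ Real.exp (11 * z) := by
        apply Real.exp_le_exp.2; linarith
      have e2 : Real.exp 11 = e ^ 10 * e := by
        rw [he, ← pow_succ, ← Real.exp_nat_mul]; norm_num
      have e3 : (2.7 : ℝ) ^ 10 ≤ e ^ 10 := by
        gcongr; linarith
      have e4 : (8000 : ℝ) ≤ (2.7 : ℝ) ^ 10 := by norm_num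
      have e5 : 8000 * e ≤ e ^ 10 * e := by gcongr; linarith
      linarith
    have d3 : Real.exp (-2 * z) = Real.exp (11 * z) * Real.exp (2 * z) * ε := by
      rw [hε, ← Real.exp_add, ← Real.exp_add]; congr 1; ring
    have d4 : 16000 * e * z ^ 2 * ε ≤ Real.exp (-2 * z) := by
      rw [d3]
      calc 16000 * e * z ^ 2 * ε = (8000 * e) * (2 * z ^ 2) * ε := by ring
        _ ≤ _ := by gcongr
    have d5 : ε ≤ X / (16 * e * k) := by
      rw [le_div_iff₀ (by positivity), hX]
      have : (k : ℝ) = z ^ 2 * i := by rw [hzsq]; field_simp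
      rw [this]
      nlinarith
    calc X * ε ≤ X * (X / (16 * e * k)) := by gcongr
      _ = Y / 2 := by rw [hY]; field_simp; ring
  have hsplit : T = ∑ m ∈ range (i + 2), (N.choose m : ℝ) * t m * r ^ m +
      ∑ m ∈ Finset.Ico (i + 2) (N + 1), (N.choose m : ℝ) * t m * r ^ m := by
    rw [hS, Finset.sum_range_add_sum_Ico _ (by omega)]
  have hf1 : Real.exp (X * ε) ≤ Real.exp (Y / 2) := Real.exp_le_exp.2 hXε
  have hf2 : Real.exp Y = Real.exp (Y / 2) * Real.exp (Y / 2) := by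
    rw [← Real.exp_add]; congr 1; ring
  have hf3 := Real.add_one_le_exp (Y / 2)
  nlinarith

/-- the threshold exponent -/
noncomputable def thr (k m : ℕ) : ℝ := √((k : ℝ) * ((k - m : ℕ) : ℝ)) - ((k - m : ℕ) : ℝ)

lemma thr_zero (k : ℕ) : thr k 0 = 0 := by
  simp [thr]

lemma thr_nonneg (k m : ℕ) : 0 ≤ thr k m := by
  rw [thr, sub_nonneg]
  apply Real.le_sqrt_of_sq_le
  have : ((k - m : ℕ) : ℝ) ≤ k := by exact_mod_cast Nat.sub_le k m
  rw [sq]; gcongr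

lemma thr_top (k m : ℕ) (h : k ≤ m) : thr k m = 0 := by
  simp [thr, Nat.sub_eq_zero_of_le h]

lemma thr_le (k m : ℕ) (h : m ≤ k) : thr k m ≤ m := by
  rw [thr, Nat.cast_sub h]
  have h' : (m : ℝ) ≤ k := by exact_mod_cast h
  have : √((k : ℝ) * (k - m)) ≤ k := by
    apply Real.sqrt_le_iff.2
    refine ⟨by positivity, ?_⟩
    nlinarith [(by positivity : 0 ≤ (k : ℝ) * m)]
  linarith

lemma thr_diff (k i p m : ℕ) (hi : 1 ≤ i) (hp : p + i = k) (hm : m ≤ i + 1) :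
    thr k (p + m) ≤ thr k p + m - √((k : ℝ) / i) / 2 * m := by
  have hi' : (1 : ℝ) ≤ i := by exact_mod_cast hi
  set κ := √(k : ℝ) with hκ
  set s := √(i : ℝ) with hs
  have hs1 : 1 ≤ s := by rw [hs, Real.one_le_sqrt]; exact hi'
  have hs0 : 0 < s := by linarith
  have hκ0 : 0 ≤ κ := Real.sqrt_nonneg _
  have hssq : s ^ 2 = i := Real.sq_sqrt (by positivity)
  have h1 : thr k p = κ * s - i := by
    rw [thr, show k - p = i by omega, Real.sqrt_mul (by positivity)]
  have h2 : √((k : ℝ) / i) = κ / s := by rw [Real.sqrt_div (by positivity)]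
  rw [h1, h2]
  rcases Nat.lt_or_ge i m with h | h
  · have hm' : m = i + 1 := by omega
    rw [thr_top k (p + m) (by omega), hm']
    push_cast
    rw [← hssq]
    have : κ / s / 2 * (s ^ 2 + 1) ≤ κ * s := by
      rw [div_div, div_mul_eq_mul_div, div_le_iff₀ (by positivity)]
      nlinarith [mul_nonneg hκ0 (by nlinarith : 0 ≤ s ^ 2 - 1)]
    linarith
  · set d := √((i - m : ℕ) : ℝ) with hd
    have hd0 : 0 ≤ d := Real.sqrt_nonneg _
    have hdsq : d ^ 2 = i - m := by
      rw [hd, Real.sq_sqrt (by positivity), Nat.cast_sub h]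
    have h3 : thr k (p + m) = κ * d - (i - m) := by
      rw [thr, show k - (p + m) = i - m by omega, Real.sqrt_mul (by positivity), ← hd,
        Nat.cast_sub h]
    rw [h3]
    have hm' : (m : ℝ) = s ^ 2 - d ^ 2 := by linarith
    have : κ / s / 2 * m ≤ κ * s - κ * d := by
      rw [hm', div_div, div_mul_eq_mul_div, div_le_iff₀ (by positivity)]
      nlinarith [mul_nonneg hκ0 (sq_nonneg (s - d))]
    linarith

lemma omega_le (p m : ℕ) :
    √((p + m).factorial : ℝ) ≤ √(p.factorial : ℝ) * √((p + m : ℕ) : ℝ) ^ m := by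
  apply Real.sqrt_le_iff.2
  refine ⟨by positivity, ?_⟩
  rw [mul_pow, Real.sq_sqrt (by positivity), ← pow_mul, mul_comm m 2, pow_mul,
    Real.sq_sqrt (by positivity)]
  have h1 := Nat.factorial_mul_ascFactorial p m
  have h2 := Nat.ascFactorial_le_pow_add p m
  have : (p + m).factorial ≤ p.factorial * (p + m) ^ m := by
    rw [← h1]; gcongr
  exact_mod_cast this

lemma select (n k : ℕ) (a : ℕ → ℝ) (ha : ∀ m, 0 ≤ a m) (a0 : a 0 = 1) (hk1 : 1 ≤ k)
    (hk : a k ≤ √(k.factorial : ℝ)) (hk' : a (k + 1) ≤ √((k + 1).factorial : ℝ))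
    (W : ∀ (p N : ℕ) (R g : ℝ), p + N ≤ n → a p ≠ 0 → 0 < R → 0 < g →
      g ^ N * a p ^ 2 ≤ R ^ (2 * N) * a (p + N) ^ 2 →
      a p ^ 2 * (1 + g) ^ N ≤ (∑ m ∈ range (N + 1), (N.choose m : ℝ) * a (p + m) * R ^ m) ^ 2)
    (l : ℕ) (hkl : k ≤ l) (hln : l ≤ n) :
    a l ≤ Real.exp 30 ^ l * √(l.factorial : ℝ) := by
  by_contra! hcon
  set K := Real.exp 30 with hK
  have hK1 : 1 ≤ K := Real.one_le_exp (by norm_num)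
  have hK0 : 0 < K := by linarith
  have hKl : ∀ m : ℕ, √(m.factorial : ℝ) ≤ K ^ m * √(m.factorial : ℝ) := fun m =>
    le_mul_of_one_le_left (Real.sqrt_nonneg _) (one_le_pow₀ hK1)
  have hl2 : k + 2 ≤ l := by
    by_contra hlt
    have : l = k ∨ l = k + 1 := by omega
    rcases this with rfl | rfl
    · linarith [hKl l]
    · linarith [hKl (k + 1)]
  have hf : ∀ m : ℕ, 0 < √(m.factorial : ℝ) := fun m => by
    have := Nat.factorial_pos m
    positivity
  obtain ⟨b, hb⟩ : ∃ b : ℕ → ℝ, ∀ m, a m = b m * √(m.factorial : ℝ) :=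
    ⟨fun m => a m / √(m.factorial : ℝ), fun m => by rw [div_mul_cancel₀ _ (hf m).ne']⟩
  have hb0 : ∀ m, 0 ≤ b m := fun m => by
    have := ha m
    rw [hb] at this
    exact nonneg_of_mul_nonneg_left this (hf m)
  have hbl : K ^ l < b l := by
    rw [hb l] at hcon
    exact lt_of_mul_lt_mul_right hcon (hf l).le
  obtain ⟨Θ, hΘ⟩ : ∃ Θ : ℕ → ℝ, ∀ m, Θ m = Real.exp (30 * thr k m) := ⟨_, fun _ => rfl⟩
  have hΘ1 : ∀ m, 1 ≤ Θ m := fun m => by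
    rw [hΘ]; apply Real.one_le_exp
    have := thr_nonneg k m
    positivity
  -- choose p
  obtain ⟨p, hpk, hpb, hpm⟩ : ∃ p, p < k ∧ Θ p ≤ b p ∧ ∀ m, p < m → m < k → b m < Θ m := by
    classical
    have hP0 : Θ 0 ≤ b 0 := by
      have := hb 0
      rw [a0] at this
      rw [hΘ, thr_zero]; simp at this ⊢; linarith
    refine ⟨Nat.findGreatest (fun p => Θ p ≤ b p) (k - 1), ?_, ?_, ?_⟩
    · have := Nat.findGreatest_le (P := fun p => Θ p ≤ b p) (k - 1)
      omega
    · exact Nat.findGreatest_spec (P := fun p => Θ p ≤ b p) (Nat.zero_le _) hP0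
    · intro m h1 h2
      have := Nat.findGreatest_is_greatest h1 (by omega : m ≤ k - 1)
      exact not_le.1 this
  have hpm' : ∀ m, p < m → m ≤ k + 1 → b m ≤ Θ m := by
    intro m h1 h2
    rcases Nat.lt_or_ge m k with h | h
    · exact (hpm m h1 h).le
    · refine le_trans ?_ (hΘ1 m)
      have : m = k ∨ m = k + 1 := by omega
      rcases this with rfl | rfl
      · rw [hb] at hk
        exact le_of_mul_le_mul_right (by simpa using hk) (hf m)
      · rw [hb] at hk'
        exact le_of_mul_le_mul_right (by simpa using hk') (hf (k + 1))
  have hbp : 0 < b p := by linarith [hΘ1 p]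
  -- choose q
  obtain ⟨q, hq, hqmax⟩ := Finset.exists_max_image (Finset.Icc (k + 2) n)
    (fun q => (b q / b p) ^ ((((q - p : ℕ) : ℝ))⁻¹)) ⟨l, Finset.mem_Icc.2 ⟨hl2, hln⟩⟩
  obtain ⟨hq1, hq2⟩ := Finset.mem_Icc.1 hq
  obtain ⟨τ, hτ⟩ : ∃ τ, τ = (b q / b p) ^ ((((q - p : ℕ) : ℝ))⁻¹) := ⟨_, rfl⟩
  have hpowr : ∀ m, p < m → ((b m / b p) ^ ((((m - p : ℕ) : ℝ))⁻¹)) ^ (m - p) = b m / b p := by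
    intro m hm
    apply Real.rpow_inv_natCast_pow
    · have := hb0 m
      positivity
    · omega
  have hτ0 : 0 < τ := by
    have h1 := hqmax l (Finset.mem_Icc.2 ⟨hl2, hln⟩)
    rw [hτ]
    refine lt_of_lt_of_le ?_ h1
    have : 0 < b l := lt_trans (by positivity) hbl
    positivity
  have hτq : b q = b p * τ ^ (q - p) := by
    rw [hτ, hpowr q (by omega)]; field_simp
  have hτm : ∀ m, k + 2 ≤ m → m ≤ n → b m ≤ b p * τ ^ (m - p) := by
    intro m h1 h2
    have h3 := hqmax m (Finset.mem_Icc.2 ⟨h1, h2⟩)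
    have h4 : b m / b p ≤ τ ^ (m - p) := by
      rw [← hpowr m (by omega)]
      rw [← hτ] at h3
      have := hb0 m
      gcongr
    rw [div_le_iff₀ hbp] at h4
    linarith
  have hlow : ∀ m, m ≤ l - p → Θ p * K ^ m ≤ b p * τ ^ m := by
    intro m hm
    rcases le_or_gt K τ with h | h
    · gcongr
    · have h1 := hτm l hl2 hln
      have h2 : τ ^ (l - p - m) ≤ K ^ (l - p - m) := by gcongr
      have h3 : Θ p ≤ K ^ p := by
        rw [hΘ, hK, ← Real.exp_nat_mul]
        apply Real.exp_le_exp.2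
        linarith [thr_le k p hpk.le]
      have h4 : b p * τ ^ m * K ^ (l - p - m) ≥ K ^ (p + m) * K ^ (l - p - m) := by
        calc b p * τ ^ m * K ^ (l - p - m) ≥ b p * τ ^ m * τ ^ (l - p - m) := by gcongr
          _ = b p * τ ^ (l - p) := by
            rw [mul_assoc, ← pow_add]; congr 2; omega
          _ ≥ K ^ l := by linarith
          _ = _ := by rw [← pow_add]; congr 1; omega
      have h5 : K ^ (p + m) ≤ b p * τ ^ m := le_of_mul_le_mul_right h4 (by positivity)
      calc Θ p * K ^ m ≤ K ^ p * K ^ m := by gcongr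
        _ = K ^ (p + m) := by rw [pow_add]
        _ ≤ _ := h5
  obtain ⟨i, hi⟩ : ∃ i, p + i = k := ⟨k - p, by omega⟩
  obtain ⟨N, hN⟩ : ∃ N, p + N = q := ⟨q - p, by omega⟩
  have hap : 0 < a p := by rw [hb]; have := hf p; positivity
  -- t in terms of b
  have htb : ∀ m c, b (p + m) ≤ c * (b p * τ ^ m) →
      a (p + m) / (a p * τ ^ m) ≤ √((p + m : ℕ) : ℝ) ^ m * c := by
    intro m c h
    have h1 := omega_le p m
    have h2 := hb0 (p + m)
    rw [div_le_iff₀ (by positivity), hb (p + m), hb p]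
    calc b (p + m) * √((p + m).factorial : ℝ)
        ≤ (c * (b p * τ ^ m)) * (√(p.factorial : ℝ) * √((p + m : ℕ) : ℝ) ^ m) := by
          apply mul_le_mul h h1 (Real.sqrt_nonneg _) (h2.trans h)
      _ = _ := by ring
  refine contra_core k i p N (by omega) (by omega) hi (by omega)
    (fun m => a (p + m) / (a p * τ ^ m)) ?_ ?_ ?_ ?_
  · intro m hm
    rcases Nat.eq_zero_or_pos m with rfl | hm0
    · simp [hap.ne']
    apply htb
    have h1 := hpm' (p + m) (by omega) (by omega)
    have h2 := hlow m (by omega)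
    have h3 : Θ (p + m) ≤ Real.exp (-15 * √((k : ℝ) / i)) ^ m * (Θ p * K ^ m) := by
      rw [hΘ, hΘ, hK, ← Real.exp_nat_mul, ← Real.exp_nat_mul, ← Real.exp_add, ← Real.exp_add]
      apply Real.exp_le_exp.2
      have := thr_diff k i p m (by omega) hi hm
      linarith
    refine h1.trans (h3.trans ?_)
    gcongr
  · intro m hm1 hm2
    have h1 := hτm (p + m) (by omega) (by omega)
    have := htb m 1 (by rw [show p + m - p = m by omega] at h1; linarith)
    simpa using this
  · intro r g hr hg hrg
    have hW := W p N (r / τ) g (by omega) hap.ne' (by positivity) hg (by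
      rw [hN, hb p, hb q, hτq, ← hN, show p + N - p = N by omega, mul_pow, mul_pow, mul_pow,
        Real.sq_sqrt (by positivity), Real.sq_sqrt (by positivity), div_pow]
      have h1 : (N.factorial : ℝ) * p.factorial ≤ (p + N).factorial := by
        have := Nat.le_of_dvd (Nat.factorial_pos _) (Nat.factorial_mul_factorial_dvd_factorial_add p N)
        rw [mul_comm] at this
        exact_mod_cast this
      calc g ^ N * (b p ^ 2 * (p.factorial : ℝ))
          ≤ (r ^ (2 * N) * (N.factorial : ℝ)) * (b p ^ 2 * (p.factorial : ℝ)) := by gcongr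
        _ = r ^ (2 * N) * b p ^ 2 * ((N.factorial : ℝ) * p.factorial) := by ring
        _ ≤ r ^ (2 * N) * b p ^ 2 * (p + N).factorial := by gcongr
        _ = _ := by
          rw [← pow_mul τ, mul_comm N 2]; field_simp)
    have hsum : ∑ m ∈ range (N + 1), (N.choose m : ℝ) * a (p + m) * (r / τ) ^ m =
        a p * ∑ m ∈ range (N + 1), (N.choose m : ℝ) * (a (p + m) / (a p * τ ^ m)) * r ^ m := by
      rw [Finset.mul_sum]
      refine Finset.sum_congr rfl fun m _ => ?_
      rw [div_pow]; field_simp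
    rw [hsum, mul_pow] at hW
    exact le_of_mul_le_mul_left hW (by positivity)
  · intro m
    have := ha (p + m)
    positivity

lemma pow_le_choose_aux : ∀ m n : ℕ, m ≤ n → n ^ m ≤ m ^ m * n.choose m
  | 0, n, _ => by simp
  | m + 1, 0, h => by omega
  | m + 1, n + 1, h => by
    have ih := pow_le_choose_aux m n (by omega)
    have key : (n + 1) ^ m ≤ (m + 1) ^ m * n.choose m := by
      rcases Nat.eq_zero_or_pos m with rfl | hm
      · simp
      have hm' : 0 < m ^ m := by positivity
      refine Nat.le_of_mul_le_mul_left ?_ hm'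
      calc m ^ m * (n + 1) ^ m = (m * (n + 1)) ^ m := (mul_pow _ _ _).symm
        _ ≤ ((m + 1) * n) ^ m := Nat.pow_le_pow_left (by nlinarith) m
        _ = (m + 1) ^ m * n ^ m := mul_pow _ _ _
        _ ≤ (m + 1) ^ m * (m ^ m * n.choose m) := Nat.mul_le_mul_left _ ih
        _ = _ := by ring
    have h2 := Nat.add_one_mul_choose_eq n m
    calc (n + 1) ^ (m + 1) = (n + 1) ^ m * (n + 1) := pow_succ _ _
      _ ≤ (m + 1) ^ m * n.choose m * (n + 1) := Nat.mul_le_mul_right _ key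
      _ = (m + 1) ^ m * ((n + 1) * n.choose m) := by ring
      _ = _ := by rw [h2]; ring

theorem lee_form_inequality :
    ∃ C : ℝ, 0 < C ∧ ∀ (n : ℕ), 1 ≤ n → ∀ (y : Fin n → ℝ) (k : ℕ),
      1 ≤ k → k < n → ∀ θ : ℝ, 0 < θ →
      |esymmS n k y| ^ 2 ≤ θ ^ k / (Nat.factorial k : ℝ) →
      |esymmS n (k + 1) y| ^ 2 ≤ θ ^ (k + 1) / (Nat.factorial (k + 1) : ℝ) →
      ∀ ℓ : ℕ, k ≤ ℓ → ℓ ≤ n →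
        |esymmS n ℓ y| ^ 2 ≤ (C * θ) ^ ℓ / (Nat.factorial ℓ : ℝ) := by
  refine ⟨(Real.exp 30 * Real.exp 1) ^ 2, by positivity, ?_⟩
  intro n hn y k hk hkn θ hθ h1 h2 l hkl hln
  have hn0 : (0 : ℝ) < n := by exact_mod_cast hn
  obtain ⟨e, he⟩ : ∃ e, e = Real.exp 1 := ⟨_, rfl⟩
  have he0 : 0 < e := he ▸ Real.exp_pos 1
  obtain ⟨lam, hlam⟩ : ∃ x, x = e * √θ / n := ⟨_, rfl⟩
  have hsθ : 0 < √θ := Real.sqrt_pos.2 hθ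
  have hlam0 : 0 < lam := by rw [hlam]; positivity
  obtain ⟨a, ha⟩ : ∃ a : ℕ → ℝ, ∀ m, a m = |smean n m y| / lam ^ m := ⟨_, fun _ => rfl⟩
  have hf : ∀ m : ℕ, (0 : ℝ) < (m.factorial : ℝ) := fun m => by
    exact_mod_cast Nat.factorial_pos m
  have hyp : ∀ m, m ≤ n → |esymmS n m y| ^ 2 ≤ θ ^ m / (Nat.factorial m : ℝ) →
      a m ≤ √(m.factorial : ℝ) := by
    intro m hm h
    have hc0 : (0 : ℝ) < (n.choose m : ℝ) := by exact_mod_cast Nat.choose_pos hm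
    -- binom lower bound
    have hc : (n : ℝ) ^ m ≤ e ^ m * (m.factorial : ℝ) * (n.choose m : ℝ) := by
      rcases Nat.eq_zero_or_pos m with rfl | hm0
      · simp
      have hm0' : (0 : ℝ) < m := by exact_mod_cast hm0
      have b1 : (n : ℝ) ^ m ≤ (m : ℝ) ^ m * (n.choose m : ℝ) := by
        exact_mod_cast pow_le_choose_aux m n hm
      have b2 := Real.pow_div_factorial_le_exp (m : ℝ) hm0'.le m
      rw [div_le_iff₀ (hf m)] at b2
      have b3 : Real.exp (m : ℝ) = e ^ m := by rw [he, ← Real.exp_nat_mul, mul_one]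
      rw [b3] at b2
      exact b1.trans (by gcongr)
    rw [ha, smean, abs_div, abs_of_pos hc0, div_div]
    apply Real.le_sqrt_of_sq_le
    rw [div_pow, div_le_iff₀ (by positivity)]
    refine h.trans ?_
    rw [div_le_iff₀ (hf m), hlam, div_pow, mul_pow e, mul_pow, div_pow, mul_pow, ← pow_mul √θ, mul_comm m 2,
      pow_mul √θ, Real.sq_sqrt hθ.le, mul_div_assoc', mul_div_assoc', div_mul_eq_mul_div,
      le_div_iff₀ (by positivity)]
    calc θ ^ m * ((n : ℝ) ^ m) ^ 2 ≤ θ ^ m * (e ^ m * (m.factorial : ℝ) * (n.choose m : ℝ)) ^ 2 := by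
          gcongr
      _ = _ := by ring
  have hsel := select n k a (fun m => by rw [ha]; positivity)
    (by rw [ha]; simp [smean, esymmS]) hk (hyp k hkn.le h1) (hyp (k + 1) hkn h2) ?_ l hkl hln
  · have hc0 : (0 : ℝ) < (n.choose l : ℝ) := by exact_mod_cast Nat.choose_pos hln
    rw [ha, smean, abs_div, abs_of_pos hc0, div_div, div_le_iff₀ (by positivity)] at hsel
    have hcl : (n.choose l : ℝ) ≤ (n : ℝ) ^ l / (l.factorial : ℝ) := Nat.choose_le_pow_div l n
    have hS : |esymmS n l y| ≤ (Real.exp 30 * e * √θ) ^ l / √(l.factorial : ℝ) := by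
      refine hsel.trans ?_
      have hsq : √(l.factorial : ℝ) * √(l.factorial : ℝ) = l.factorial :=
        Real.mul_self_sqrt (hf l).le
      have hs0 : 0 < √(l.factorial : ℝ) := Real.sqrt_pos.2 (hf l)
      calc Real.exp 30 ^ l * √(l.factorial : ℝ) * ((n.choose l : ℝ) * lam ^ l)
          ≤ Real.exp 30 ^ l * √(l.factorial : ℝ) * ((n : ℝ) ^ l / (l.factorial : ℝ) * lam ^ l) := by
            gcongr
        _ = _ := by
            rw [show (n : ℝ) ^ l / (l.factorial : ℝ) =
              (n : ℝ) ^ l / (√(l.factorial : ℝ) * √(l.factorial : ℝ)) by rw [hsq]]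
            generalize √(l.factorial : ℝ) = q at hs0
            rw [hlam, div_pow, mul_pow, mul_pow, mul_pow]; field_simp
    calc |esymmS n l y| ^ 2 ≤ ((Real.exp 30 * e * √θ) ^ l / √(l.factorial : ℝ)) ^ 2 := by gcongr
      _ = _ := by
        rw [div_pow, Real.sq_sqrt (hf l).le, ← he, ← pow_mul, mul_comm l 2, pow_mul, mul_pow _ √θ,
          Real.sq_sqrt hθ.le]
  · intro p N R g hpN hap hR hg hgR
    have hs := winPoly_splits _ n (winPoly_smean_splits n y) p N hpN
    have hsp : smean n p y ≠ 0 := by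
      intro h0
      apply hap
      rw [ha, h0]; simp
    have hw := window (fun m => smean n m y) p N hs hsp (R / lam) g (by positivity) hg (by
      rw [ha, ha, div_pow, div_pow, sq_abs, sq_abs, mul_div_assoc', mul_div_assoc',
        div_le_div_iff₀ (by positivity) (by positivity)] at hgR
      rw [div_pow, div_mul_eq_mul_div, le_div_iff₀ (by positivity)]
      have h5 : 0 < (lam ^ p) ^ 2 := by positivity
      refine le_of_mul_le_mul_right ?_ h5
      calc _ = g ^ N * smean n p y ^ 2 * (lam ^ (p + N)) ^ 2 := by ring
        _ ≤ _ := hgR)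
    have hsum : ∑ m ∈ range (N + 1), (N.choose m : ℝ) * a (p + m) * R ^ m =
        (∑ m ∈ range (N + 1), (N.choose m : ℝ) * |smean n (p + m) y| * (R / lam) ^ m) / lam ^ p := by
      rw [Finset.sum_div]
      refine Finset.sum_congr rfl fun m _ => ?_
      rw [ha, div_pow, pow_add]; field_simp
    rw [hsum, ha, div_pow, div_pow, sq_abs, div_mul_eq_mul_div]
    exact div_le_div_of_nonneg_right hw (by positivity)
end

section
/- Let n ≥ 1, let y_1, …, y_n be real numbers with |y_1 ⋯ y_n| = 1, and let r > 0 be real. Then ∏_{j=1}^{n} (y_j^2 + r^2) ≥ (1 + r^2)^n. -/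
open Finset Real

theorem jensen_step (n : ℕ) (hn : 1 ≤ n) (y : Fin n → ℝ) (hy : |∏ i, y i| = 1)
    (r : ℝ) (hr : 0 < r) :
    ∏ i, (y i ^ 2 + r ^ 2) ≥ (1 + r ^ 2) ^ n := by
  have hc : 0 < 1 + r ^ 2 := by positivity
  have key : ∀ i, (1 + r ^ 2) * (y i ^ 2) ^ (1 / (1 + r ^ 2)) ≤ y i ^ 2 + r ^ 2 := by
    intro i
    have h := Real.geom_mean_le_arith_mean2_weighted (w₁ := 1 / (1 + r ^ 2))
      (w₂ := r ^ 2 / (1 + r ^ 2)) (p₁ := y i ^ 2) (p₂ := 1) (by positivity) (by positivity)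
      (by positivity) (by positivity) (by field_simp)
    rw [Real.one_rpow, mul_one] at h
    calc _ ≤ (1 + r ^ 2) * (1 / (1 + r ^ 2) * y i ^ 2 + r ^ 2 / (1 + r ^ 2) * 1) :=
          mul_le_mul_of_nonneg_left h hc.le
      _ = _ := by field_simp
  have hp : ∏ i, (y i ^ 2) = 1 := by
    rw [Finset.prod_pow, ← sq_abs, hy, one_pow]
  have h1 : ∏ i, ((1 + r ^ 2) * (y i ^ 2) ^ (1 / (1 + r ^ 2))) = (1 + r ^ 2) ^ n := by
    rw [Finset.prod_mul_distrib, Real.finsetProd_rpow _ _ (fun i _ => sq_nonneg (y i)), hp,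
      Real.one_rpow, mul_one]
    simp
  rw [ge_iff_le, ← h1]
  exact Finset.prod_le_prod (fun i _ => by positivity) (fun i _ => key i)
end
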